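/- Fix ρ ∈ (0,1), ν ∈ ℝ, and assume (ρ, ν) ≠ (1/√2, π/2 + nπ) for every integer n. Then the quantum walker converges in distribution: for every real number x, lim_{t→∞} Σ_{y ∈ ℤ, y ≤ x·t} P(X_t = y) = ∫_{−∞}^{x} f(y) dy, where f(y) = (√(η₊(y)) + √(η₋(y))) · γ(y) / (2π(1−y²)√(ξ(y))) for y ∈ (−h*, h*) and f(y) = 0 otherwise. -/

import Mathlib

open Real Filter Topology MeasureTheory

noncomputable section

/-- `ρ₀ = √(1-ρ²)`. -/
def rz (ρ : ℝ) : ℝ := Real.sqrt (1 - ρ ^ 2)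

/-- `α₀ = ρ e^{iν}`. -/
def az (ρ ν : ℝ) : ℂ := (ρ : ℂ) * Complex.exp (Complex.I * (ν : ℂ))

/-- `B₋`. -/
def Bm (ρ ν : ℝ) : Matrix (Fin 2) (Fin 2) ℂ :=
  !![0, 0; ((rz ρ) ^ 2 : ℝ), ((rz ρ : ℝ) : ℂ) * (starRingEnd ℂ) (az ρ ν)]

/-- `B₀`. -/
def B0 (ρ ν : ℝ) : Matrix (Fin 2) (Fin 2) ℂ :=
  !![-(az ρ ν) * ((rz ρ : ℝ) : ℂ), -((ρ ^ 2 : ℝ) : ℂ);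
      -((ρ ^ 2 : ℝ) : ℂ), ((rz ρ : ℝ) : ℂ) * (starRingEnd ℂ) (az ρ ν)]

/-- `B₊`. -/
def Bp (ρ ν : ℝ) : Matrix (Fin 2) (Fin 2) ℂ :=
  !![-(az ρ ν) * ((rz ρ : ℝ) : ℂ), (((rz ρ) ^ 2 : ℝ) : ℂ); 0, 0]

/-- The quantum walk `Ψ_t : ℤ → ℂ²`. -/
def qwalk (ρ ν : ℝ) (α β : ℂ) : ℕ → ℤ → Fin 2 → ℂ
  | 0, x => if x = 0 then ![α, β] else 0
  | t + 1, x =>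
      (Bm ρ ν).mulVec (qwalk ρ ν α β t (x + 1)) + (B0 ρ ν).mulVec (qwalk ρ ν α β t x)
        + (Bp ρ ν).mulVec (qwalk ρ ν α β t (x - 1))

/-- `P(X_t = x) = ‖Ψ_t(x)‖²`. -/
def qprob (ρ ν : ℝ) (α β : ℂ) (t : ℕ) (x : ℤ) : ℝ :=
  ‖qwalk ρ ν α β t x 0‖ ^ 2 + ‖qwalk ρ ν α β t x 1‖ ^ 2

/-- `ξ(x) = (ρ²−x²)(ρ₀²−x²) − ρ²ρ₀²(cos²ν)x²`. -/
def xif (ρ ν x : ℝ) : ℝ :=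
  (ρ ^ 2 - x ^ 2) * ((rz ρ) ^ 2 - x ^ 2) - ρ ^ 2 * (rz ρ) ^ 2 * (Real.cos ν) ^ 2 * x ^ 2

/-- `η₊(x)`. -/
def etaP (ρ ν x : ℝ) : ℝ :=
  1 - ρ ^ 2 * (rz ρ) ^ 2 * (1 + (Real.sin ν) ^ 2)
    - (1 - ρ ^ 2 * (rz ρ) ^ 2 * (Real.cos ν) ^ 2) * x ^ 2
    + 2 * ρ * rz ρ * Real.sin ν * Real.sqrt (xif ρ ν x)

/-- `η₋(x)`. -/
def etaM (ρ ν x : ℝ) : ℝ :=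
  1 - ρ ^ 2 * (rz ρ) ^ 2 * (1 + (Real.sin ν) ^ 2)
    - (1 - ρ ^ 2 * (rz ρ) ^ 2 * (Real.cos ν) ^ 2) * x ^ 2
    - 2 * ρ * rz ρ * Real.sin ν * Real.sqrt (xif ρ ν x)

/-- `γ(x)`. -/
def gam (ρ ν : ℝ) (α β : ℂ) (x : ℝ) : ℝ :=
  1 + (‖α‖ ^ 2 - ‖β‖ ^ 2
    - (2 * rz ρ / ρ) * ((α * (starRingEnd ℂ) β).re * Real.cos ν
        - (α * (starRingEnd ℂ) β).im * Real.sin ν)) * x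

/-- `h*`. -/
def hstar (ρ ν : ℝ) : ℝ :=
  (1 / 2) * (Real.sqrt ((1 + ρ * rz ρ) ^ 2 - ρ ^ 2 * (rz ρ) ^ 2 * (Real.sin ν) ^ 2)
    - Real.sqrt ((1 - ρ * rz ρ) ^ 2 - ρ ^ 2 * (rz ρ) ^ 2 * (Real.sin ν) ^ 2))

/-- The limit density function `f`. -/
def dens (ρ ν : ℝ) (α β : ℂ) (y : ℝ) : ℝ :=
  if y ∈ Set.Ioo (-(hstar ρ ν)) (hstar ρ ν) then
    (Real.sqrt (etaP ρ ν y) + Real.sqrt (etaM ρ ν y)) * gam ρ ν α β y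
      / (2 * π * (1 - y ^ 2) * Real.sqrt (xif ρ ν y))
  else 0

/-
In the Fourier picture one step of the walk is multiplication by a unitary `2 × 2` matrix which,
after shifting the momentum by `ν`, is `i sin θ(φ) + H(φ)` with `sin θ(φ) = ρ ρ₀ (sin φ - sin ν)`
and a traceless Hermitian `H(φ)` satisfying `H(φ)² = cos² θ(φ)`. Its eigenvalues are `exp (iθ)`
and `exp (i(π - θ))`; they are distinct for every `φ` exactly because `(ρ, ν)` is not exceptional.
By Parseval the characteristic function of `X_t / t` at `u` is the mean over `φ` of the inner
product of the evolved state at `φ` with the one at `φ - u / t`. As `t → ∞` the cross terms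
between the bands vanish and the phase differences converge to `∓ u θ'(φ)`, so the limit is the
law of the group velocity `θ'(φ)` weighted by the squared components of the initial state in the
bands. Since `θ'` maps two arcs of the momentum circle bijectively onto `(-h*, h*)`, inverting it
there (through a quadratic equation whose discriminant is `ξ`) turns this law into the density
`f`.
-/

section FourierSeries

open Complex (I)
open scoped InnerProductSpace

lemma intervalIntegral_comp_pi_sub {E : Type*} [NormedAddCommGroup E] [NormedSpace ℝ E] {f : ℝ → E}
    (hf : Function.Periodic f (2 * π)) :
    ∫ φ in (0 : ℝ)..2 * π, f (π - φ) = ∫ φ in (0 : ℝ)..2 * π, f φ := by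
  rw [intervalIntegral.integral_comp_sub_left]
  convert hf.intervalIntegral_add_eq (-π) 0 using 2 <;> ring

lemma hasSum_fourier_shift {E : Type*} [AddCommGroup E] [Module ℂ E] [TopologicalSpace E]
    [ContinuousConstSMul ℂ E] {k : ℂ} {a : ℤ → E} {A : E}
    (ha : HasSum (fun x : ℤ ↦ Complex.exp (-(k * x * I)) • a x) A) (n : ℤ) :
    HasSum (fun x : ℤ ↦ Complex.exp (-(k * x * I)) • a (x + n)) (Complex.exp (k * n * I) • A) := by
  convert ((Equiv.addRight n).hasSum_iff.2 ha).const_smul (Complex.exp (k * n * I)) using 2 with x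
  rw [Function.comp_apply, Equiv.coe_addRight, smul_smul, ← Complex.exp_add]
  congr 2
  push_cast
  ring

lemma intervalIntegral_exp_int_mul (n : ℤ) :
    ∫ k in (0 : ℝ)..2 * π, Complex.exp (n * I * k) = if n = 0 then (2 * π : ℂ) else 0 := by
  split_ifs with hn
  · simp [hn]
  · have hexp : Complex.exp (n * I * ↑(2 * π)) = 1 := by
      rw [← Complex.exp_int_mul_two_pi_mul_I n]
      congr 1
      push_cast
      ring
    rw [integral_exp_mul_complex (mul_ne_zero (Int.cast_ne_zero.2 hn) Complex.I_ne_zero), hexp]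
    simp

variable {E : Type*} [NormedAddCommGroup E] [InnerProductSpace ℂ E]

lemma inner_exp_smul_exp_smul (k : ℝ) (x y : ℤ) (u v : E) :
    ⟪Complex.exp (-(k * x * I)) • u, Complex.exp (-(k * y * I)) • v⟫_ℂ =
      Complex.exp ((x - y : ℤ) * I * k) * ⟪u, v⟫_ℂ := by
  rw [inner_smul_left, inner_smul_right, ← Complex.exp_conj, ← mul_assoc, ← Complex.exp_add]
  simp only [map_neg, map_mul, Complex.conj_ofReal, Complex.conj_I, map_intCast]
  congr 2
  push_cast
  ring

theorem intervalIntegral_inner_fourier_sum (s : Finset ℤ) (a b : ℤ → E) :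
    ∫ k in (0 : ℝ)..2 * π, ⟪∑ x ∈ s, Complex.exp (-(k * x * I)) • a x,
        ∑ y ∈ s, Complex.exp (-(k * y * I)) • b y⟫_ℂ = 2 * π * ∑ x ∈ s, ⟪a x, b x⟫_ℂ := by
  have hint (x y : ℤ) : IntervalIntegrable
      (fun k : ℝ ↦ Complex.exp ((x - y : ℤ) * I * k) * ⟪a x, b y⟫_ℂ) volume 0 (2 * π) :=
    (by fun_prop : Continuous _).intervalIntegrable _ _
  calc
    _ = ∑ y ∈ s, ∑ x ∈ s, ∫ k in (0 : ℝ)..2 * π,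
        Complex.exp ((x - y : ℤ) * I * k) * ⟪a x, b y⟫_ℂ := by
      simp only [sum_inner, inner_sum, inner_exp_smul_exp_smul]
      rw [intervalIntegral.integral_finsetSum]
      · exact Finset.sum_congr rfl fun y _ ↦
          intervalIntegral.integral_finsetSum fun x _ ↦ hint x y
      · exact fun y _ ↦ (by fun_prop : Continuous _).intervalIntegrable _ _
    _ = ∑ y ∈ s, 2 * π * ⟪a y, b y⟫_ℂ := by
      refine Finset.sum_congr rfl fun y hy ↦ ?_
      simp only [intervalIntegral.integral_mul_const, intervalIntegral_exp_int_mul, sub_eq_zero,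
        ite_mul, zero_mul, Finset.sum_ite_eq', if_pos hy]
    _ = 2 * π * ∑ x ∈ s, ⟪a x, b x⟫_ℂ := (Finset.mul_sum ..).symm

end FourierSeries

section SpectralPart

open scoped InnerProductSpace

lemma pow_apply_of_apply_eq_smul {R M : Type*} [CommSemiring R] [AddCommMonoid M] [Module R M]
    {f : Module.End R M} {μ : R} {x : M} (h : f x = μ • x) (t : ℕ) :
    (f ^ t) x = μ ^ t • x := by
  induction t with
  | zero => simp
  | succ t ih => rw [pow_succ', Module.End.mul_apply, ih, map_smul, h, smul_smul, pow_succ]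

variable {E : Type*} [NormedAddCommGroup E] [InnerProductSpace ℂ E]

lemma norm_smul_add_smul_eq_norm_add {x y : E} (hxy : ⟪x, y⟫_ℂ = 0) {a b : ℂ} (ha : ‖a‖ = 1)
    (hb : ‖b‖ = 1) : ‖a • x + b • y‖ = ‖x + y‖ := by
  have hab : ⟪a • x, b • y⟫_ℂ = 0 := by
    rw [inner_smul_left, inner_smul_right, hxy, mul_zero, mul_zero]
  rw [← sq_eq_sq₀ (norm_nonneg _) (norm_nonneg _), sq, sq,
    norm_add_sq_eq_norm_sq_add_norm_sq_of_inner_eq_zero _ _ hab,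
    norm_add_sq_eq_norm_sq_add_norm_sq_of_inner_eq_zero _ _ hxy, norm_smul, norm_smul, ha, hb,
    one_mul, one_mul]

/-- The component of `x` in the `c`-eigenspace of an operator `T` with `T ^ 2 = c ^ 2`; the
component in the `-c`-eigenspace is `spectralPart T (-c) x`. -/
def spectralPart (T : E →ₗ[ℂ] E) (c : ℝ) (x : E) : E := (2⁻¹ : ℂ) • (x + (c : ℂ)⁻¹ • T x)

variable {T : E →ₗ[ℂ] E} {c : ℝ}

lemma spectralPart_add_spectralPart_neg (T : E →ₗ[ℂ] E) (c : ℝ) (x : E) :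
    spectralPart T c x + spectralPart T (-c) x = x := by
  simp only [spectralPart, Complex.ofReal_neg, inv_neg, neg_smul]
  module

lemma map_spectralPart (hc : c ≠ 0) (hT : ∀ x, T (T x) = (c : ℂ) ^ 2 • x) (x : E) :
    T (spectralPart T c x) = (c : ℂ) • spectralPart T c x := by
  have hc' : (c : ℂ) ≠ 0 := Complex.ofReal_ne_zero.2 hc
  simp only [spectralPart, map_smul, map_add, hT]
  match_scalars <;> field_simp

lemma inner_spectralPart_neg (hc : c ≠ 0) (hT : ∀ x, T (T x) = (c : ℂ) ^ 2 • x)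
    (hsymm : T.IsSymmetric) (x : E) : ⟪spectralPart T c x, spectralPart T (-c) x⟫_ℂ = 0 := by
  have hswap := hsymm (spectralPart T c x) (spectralPart T (-c) x)
  rw [map_spectralPart hc hT, map_spectralPart (neg_ne_zero.2 hc) (by simpa using hT),
    inner_smul_left, inner_smul_right, Complex.conj_ofReal, Complex.ofReal_neg] at hswap
  have h2c : (2 * c : ℂ) ≠ 0 := mul_ne_zero two_ne_zero (Complex.ofReal_ne_zero.2 hc)
  exact (mul_eq_zero.1 (by linear_combination hswap)).resolve_left h2c

lemma norm_spectralPart_sq (hc : c ≠ 0) (hT : ∀ x, T (T x) = (c : ℂ) ^ 2 • x)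
    (hsymm : T.IsSymmetric) (x : E) :
    ‖spectralPart T c x‖ ^ 2 = (‖x‖ ^ 2 + c⁻¹ * (⟪x, T x⟫_ℂ).re) / 2 := by
  have hinner : ⟪x, spectralPart T c x⟫_ℂ = ⟪spectralPart T c x, spectralPart T c x⟫_ℂ := by
    nth_rw 1 [← spectralPart_add_spectralPart_neg T c x]
    rw [inner_add_left, inner_eq_zero_symm.1 (inner_spectralPart_neg hc hT hsymm x), add_zero]
  have hself : ⟪x, x⟫_ℂ = ((‖x‖ ^ 2 : ℝ) : ℂ) := by
    rw [inner_self_eq_norm_sq_to_K, Complex.ofReal_pow]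
    rfl
  rw [← inner_self_eq_norm_sq (𝕜 := ℂ), ← hinner, spectralPart, inner_smul_right, inner_add_right,
    inner_smul_right, hself, ← Complex.ofReal_ofNat, ← Complex.ofReal_inv,
    ← Complex.ofReal_inv, RCLike.re_eq_complex_re, Complex.re_ofReal_mul, Complex.add_re,
    Complex.re_ofReal_mul, Complex.ofReal_re]
  ring

end SpectralPart

section Wavepacket

open Complex (I)
open scoped InnerProductSpace

lemma tendsto_mul_sub_of_hasDerivAt {f : ℝ → ℝ} {f' φ : ℝ} (hf : HasDerivAt f f' φ) (u : ℝ) :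
    Tendsto (fun t : ℕ ↦ (t : ℝ) * (f (φ - u / t) - f φ)) atTop (𝓝 (-(u * f'))) := by
  simpa [Function.comp_def, div_eq_inv_mul, ← sub_eq_add_neg] using
    hf.hasFDerivAt.lim_real (-u) |>.comp tendsto_natCast_atTop_atTop

lemma tendsto_sub_div_natCast (φ u : ℝ) : Tendsto (fun t : ℕ ↦ φ - u / t) atTop (𝓝 φ) := by
  simpa using tendsto_const_nhds.sub (tendsto_const_div_atTop_nhds_zero_nat u)

variable {E : Type*} [NormedAddCommGroup E] [InnerProductSpace ℂ E]

lemma tendsto_inner_wave_of_inner_eq_zero {A B : ℝ → E} {φ : ℝ} (θ η : ℝ → ℝ)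
    (hB : ContinuousAt B φ) (horth : ⟪A φ, B φ⟫_ℂ = 0) (u : ℝ) :
    Tendsto (fun t : ℕ ↦ ⟪Complex.exp (t * θ φ * I) • A φ,
      Complex.exp (t * η (φ - u / t) * I) • B (φ - u / t)⟫_ℂ) atTop (𝓝 0) := by
  have hlim : Tendsto (fun t : ℕ ↦ ⟪A φ, B (φ - u / t)⟫_ℂ) atTop (𝓝 0) := by
    rw [← horth]
    exact tendsto_const_nhds.inner (hB.tendsto.comp (tendsto_sub_div_natCast φ u))
  rw [tendsto_zero_iff_norm_tendsto_zero] at hlim ⊢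
  refine hlim.congr fun t ↦ ?_
  rw [inner_smul_left, inner_smul_right, norm_mul, norm_mul, RCLike.norm_conj]
  norm_cast
  rw [Complex.norm_exp_ofReal_mul_I, Complex.norm_exp_ofReal_mul_I, one_mul, one_mul]

lemma tendsto_inner_wave_self {A : ℝ → E} {θ : ℝ → ℝ} {φ v : ℝ} (hθ : HasDerivAt θ v φ)
    (hA : ContinuousAt A φ) (u : ℝ) :
    Tendsto (fun t : ℕ ↦ ⟪Complex.exp (t * θ φ * I) • A φ,
      Complex.exp (t * θ (φ - u / t) * I) • A (φ - u / t)⟫_ℂ) atTop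
      (𝓝 (Complex.exp (-(u * v) * I) * (‖A φ‖ ^ 2 : ℝ))) := by
  have hphase : Tendsto (fun t : ℕ ↦ Complex.exp (((t * (θ (φ - u / t) - θ φ) : ℝ) : ℂ) * I)) atTop
      (𝓝 (Complex.exp (((-(u * v) : ℝ) : ℂ) * I))) :=
    ((by fun_prop : Continuous fun r : ℝ ↦ Complex.exp (r * I)).tendsto _).comp
      (tendsto_mul_sub_of_hasDerivAt hθ u)
  have hamp : Tendsto (fun t : ℕ ↦ ⟪A φ, A (φ - u / t)⟫_ℂ) atTop (𝓝 ((‖A φ‖ ^ 2 : ℝ) : ℂ)) := by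
    rw [Complex.ofReal_pow, ← Complex.coe_algebraMap, ← inner_self_eq_norm_sq_to_K (𝕜 := ℂ)]
    exact tendsto_const_nhds.inner (hA.tendsto.comp (tendsto_sub_div_natCast φ u))
  convert hphase.mul hamp using 2 with t
  · rw [inner_smul_left, inner_smul_right, ← Complex.exp_conj, ← mul_assoc, ← Complex.exp_add]
    simp only [map_mul, Complex.conj_ofReal, Complex.conj_I, Complex.conj_natCast]
    push_cast
    ring_nf
  · push_cast
    rfl

theorem tendsto_inner_wavepacket {ι : Type*} [Fintype ι] {A : ι → ℝ → E} {θ : ι → ℝ → ℝ}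
    {v : ι → ℝ} {φ : ℝ} (hθ : ∀ j, HasDerivAt (θ j) (v j) φ) (hA : ∀ j, ContinuousAt (A j) φ)
    (horth : Pairwise fun i j ↦ ⟪A i φ, A j φ⟫_ℂ = 0) (u : ℝ) :
    Tendsto (fun t : ℕ ↦ ⟪∑ j, Complex.exp (t * θ j φ * I) • A j φ,
      ∑ j, Complex.exp (t * θ j (φ - u / t) * I) • A j (φ - u / t)⟫_ℂ) atTop
      (𝓝 (∑ j, Complex.exp (-(u * v j) * I) * (‖A j φ‖ ^ 2 : ℝ))) := by
  classical
  have hterm (i j : ι) : Tendsto (fun t : ℕ ↦ ⟪Complex.exp (t * θ i φ * I) • A i φ,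
      Complex.exp (t * θ j (φ - u / t) * I) • A j (φ - u / t)⟫_ℂ) atTop
      (𝓝 (if i = j then Complex.exp (-(u * v i) * I) * (‖A i φ‖ ^ 2 : ℝ) else 0)) := by
    split_ifs with hij
    · subst hij
      exact tendsto_inner_wave_self (hθ i) (hA i) u
    · exact tendsto_inner_wave_of_inner_eq_zero _ _ (hA j) (horth hij) u
  simp only [sum_inner, inner_sum]
  convert tendsto_finsetSum _ fun j _ ↦ tendsto_finsetSum Finset.univ fun i _ ↦ hterm i j using 3
  rw [Finset.sum_ite_eq', if_pos (Finset.mem_univ _)]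

end Wavepacket

section ConvergenceInLaw

theorem tendsto_measureReal_Iic_of_tendsto_charFun {μ : ℕ → Measure ℝ} {μ₀ : Measure ℝ}
    [∀ n, IsProbabilityMeasure (μ n)] [IsProbabilityMeasure μ₀] [NullSingletonClass μ₀]
    (h : ∀ u, Tendsto (fun n ↦ charFun (μ n) u) atTop (𝓝 (charFun μ₀ u))) (x : ℝ) :
    Tendsto (fun n ↦ (μ n).real (Set.Iic x)) atTop (𝓝 (μ₀.real (Set.Iic x))) := by
  let P : ℕ → ProbabilityMeasure ℝ := fun n ↦ ⟨μ n, inferInstance⟩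
  let P₀ : ProbabilityMeasure ℝ := ⟨μ₀, inferInstance⟩
  have hP : Tendsto P atTop (𝓝 P₀) := ProbabilityMeasure.tendsto_iff_tendsto_charFun.2 h
  have hfrontier : μ₀ (frontier (Set.Iic x)) = 0 := by rw [frontier_Iic, measure_singleton]
  exact (ENNReal.tendsto_toReal (measure_ne_top μ₀ _)).comp
    (ProbabilityMeasure.tendsto_measure_of_null_frontier_of_tendsto' hP hfrontier)

lemma measureReal_withDensity_ofReal {Ω : Type*} [MeasurableSpace Ω] {μ : Measure Ω} {f : Ω → ℝ}
    (hf : Integrable f μ) (hf0 : 0 ≤ f) {s : Set Ω} (hs : MeasurableSet s) :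
    (μ.withDensity fun y ↦ ENNReal.ofReal (f y)).real s = ∫ y in s, f y ∂μ := by
  rw [measureReal_def, withDensity_apply _ hs,
    ← ofReal_integral_eq_lintegral_ofReal hf.restrict (ae_of_all _ hf0),
    ENNReal.toReal_ofReal (integral_nonneg hf0)]

lemma isProbabilityMeasure_withDensity_ofReal {Ω : Type*} [MeasurableSpace Ω] {μ : Measure Ω}
    {f : Ω → ℝ} (hf : Integrable f μ) (hf0 : 0 ≤ f) (hf1 : ∫ y, f y ∂μ = 1) :
    IsProbabilityMeasure (μ.withDensity fun y ↦ ENNReal.ofReal (f y)) := by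
  rw [isProbabilityMeasure_iff_real, measureReal_withDensity_ofReal hf hf0 .univ, setIntegral_univ,
    hf1]

lemma charFun_withDensity_ofReal {μ : Measure ℝ} {f : ℝ → ℝ} (hf : AEMeasurable f μ) (hf0 : 0 ≤ f)
    (u : ℝ) :
    charFun (μ.withDensity fun y ↦ ENNReal.ofReal (f y)) u =
      ∫ y, f y • Complex.exp (u * y * Complex.I) ∂μ := by
  rw [charFun_apply_real, integral_withDensity_eq_integral_toReal_smul₀ hf.ennreal_ofReal
    (ae_of_all _ fun _ ↦ ENNReal.ofReal_lt_top)]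
  simp only [ENNReal.toReal_ofReal (hf0 _)]

end ConvergenceInLaw

section DispersionRelation

lemma lt_sin_of_mem_Ioo_arcsin {a φ : ℝ} (ha : a ∈ Set.Icc (-1) 1)
    (hφ : φ ∈ Set.Ioo (arcsin a) (π - arcsin a)) : a < sin φ := by
  have h₁ := neg_pi_div_two_le_arcsin a
  rcases le_total φ (π / 2) with h | h
  · exact (arcsin_lt_iff_lt_sin ha ⟨by linarith [hφ.1], h⟩).1 hφ.1
  · rw [← sin_pi_sub]
    exact (arcsin_lt_iff_lt_sin ha ⟨by linarith [hφ.2], by linarith⟩).1 (by linarith [hφ.2])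

/-- `|q (sin φ - S)| < 1` for every momentum `φ`: the two bands of quasi-energies
`arcsin (q (sin φ - S))` and `π - arcsin (q (sin φ - S))` never touch. -/
structure IsGapped (q S : ℝ) : Prop where
  pos : 0 < q
  mul_one_add_abs_lt_one : q * (1 + |S|) < 1

/-- The sine of the quasi-energy at momentum `φ`. -/
def sinQuasiEnergy (q S φ : ℝ) : ℝ := q * (sin φ - S)

/-- The cosine of the quasi-energy at momentum `φ`, on the band where it is positive. -/
def cosQuasiEnergy (q S φ : ℝ) : ℝ := √(1 - sinQuasiEnergy q S φ ^ 2)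

/-- The band of quasi-energies in `(-π/2, π/2)`; the other band is its reflection in `π/2`. -/
def quasiEnergy (q S φ : ℝ) : ℝ := arcsin (sinQuasiEnergy q S φ)

/-- The derivative of `quasiEnergy`: the asymptotic speed of a wave packet of momentum `φ`. -/
def groupVelocity (q S φ : ℝ) : ℝ := q * cos φ / cosQuasiEnergy q S φ

/-- The factor `g` in the derivative `-(q / c) g` of the group velocity, where `c` is
`cosQuasiEnergy`. -/
def velocitySlope (q S φ : ℝ) : ℝ :=
  (1 - groupVelocity q S φ ^ 2) * sin φ + S * groupVelocity q S φ ^ 2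

/-- The quadratic polynomial in `sin φ` to which `velocitySlope` is proportional. -/
def slopeQuadratic (q S σ : ℝ) : ℝ :=
  q ^ 2 * S * σ ^ 2 + (1 - q ^ 2 - q ^ 2 * S ^ 2) * σ + q ^ 2 * S

/-- The quartic whose smallest positive root is the largest group velocity. -/
def velocityQuartic (q S y : ℝ) : ℝ := y ^ 4 - (1 + q ^ 2 * (1 - S ^ 2)) * y ^ 2 + q ^ 2

/-- The largest group velocity, i.e. the speed of the wave front. -/
def frontVelocity (q S : ℝ) : ℝ :=
  (√((1 + q) ^ 2 - q ^ 2 * S ^ 2) - √((1 - q) ^ 2 - q ^ 2 * S ^ 2)) / 2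

/-- The momentum in `(-π/2, π/2)` at which the group velocity is `frontVelocity`. -/
def frontMomentum (q S : ℝ) : ℝ :=
  arcsin (-(S * frontVelocity q S ^ 2 / (1 - frontVelocity q S ^ 2)))

/-- The sine of the momentum at which the group velocity takes the value `y` while decreasing. -/
def branchSin (q S y : ℝ) : ℝ := (√(velocityQuartic q S y) - q * S * y ^ 2) / (q * (1 - y ^ 2))

/-- The cosine of the quasi-energy at the momentum described in `branchSin`. -/
def branchCos (q S y : ℝ) : ℝ := √(1 - (q * (branchSin q S y - S)) ^ 2)

/-- The density of the image of Lebesgue measure on one period under the group velocity. -/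
def velocityDensity (q S y : ℝ) : ℝ :=
  (branchCos q S y + branchCos q (-S) y) / √(velocityQuartic q S y)

lemma cos_quasiEnergy (q S φ : ℝ) : cos (quasiEnergy q S φ) = cosQuasiEnergy q S φ :=
  cos_arcsin _

lemma hasDerivAt_sinQuasiEnergy (q S φ : ℝ) :
    HasDerivAt (sinQuasiEnergy q S) (q * cos φ) φ :=
  ((hasDerivAt_sin φ).sub_const S).const_mul q

lemma cosQuasiEnergy_pi_sub (q S φ : ℝ) : cosQuasiEnergy q S (π - φ) = cosQuasiEnergy q S φ := by
  simp only [cosQuasiEnergy, sinQuasiEnergy, sin_pi_sub]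

lemma cosQuasiEnergy_periodic (q S : ℝ) : Function.Periodic (cosQuasiEnergy q S) (2 * π) :=
  fun φ ↦ by simp only [cosQuasiEnergy, sinQuasiEnergy, sin_add_two_pi]

lemma groupVelocity_pi_sub (q S φ : ℝ) : groupVelocity q S (π - φ) = -groupVelocity q S φ := by
  simp [groupVelocity, cosQuasiEnergy, sinQuasiEnergy, neg_div]

lemma groupVelocity_two_pi_sub (q S φ : ℝ) :
    groupVelocity q S (2 * π - φ) = groupVelocity q (-S) φ := by
  simp only [groupVelocity, cosQuasiEnergy, sinQuasiEnergy, cos_two_pi_sub, sin_two_pi_sub]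
  ring_nf

lemma groupVelocity_periodic (q S : ℝ) : Function.Periodic (groupVelocity q S) (2 * π) := fun φ ↦ by
  simp [groupVelocity, cosQuasiEnergy, sinQuasiEnergy]

lemma velocityQuartic_neg_right (q S y : ℝ) :
    velocityQuartic q (-S) y = velocityQuartic q S y := by
  simp [velocityQuartic]

lemma frontVelocity_neg_right (q S : ℝ) : frontVelocity q (-S) = frontVelocity q S := by
  simp [frontVelocity]

lemma frontMomentum_neg_right (q S : ℝ) : frontMomentum q (-S) = -frontMomentum q S := by
  simp [frontMomentum, frontVelocity_neg_right, arcsin_neg, neg_div]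

/-- For `y` the group velocity at momentum `φ` and `σ = sin φ`, the left-hand side vanishes. -/
lemma velocityQuartic_sub_sq (q S y σ : ℝ) :
    (1 - y ^ 2) * (q ^ 2 * (1 - σ ^ 2) - y ^ 2 * (1 - (q * (σ - S)) ^ 2)) =
      velocityQuartic q S y - (q * ((1 - y ^ 2) * σ + S * y ^ 2)) ^ 2 := by
  unfold velocityQuartic
  ring

namespace IsGapped

variable {q S : ℝ} (h : IsGapped q S)
include h

lemma neg : IsGapped q (-S) := ⟨h.pos, by rw [abs_neg]; exact h.mul_one_add_abs_lt_one⟩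

lemma abs_sinQuasiEnergy_lt_one (φ : ℝ) : |sinQuasiEnergy q S φ| < 1 :=
  calc |sinQuasiEnergy q S φ| = q * |sin φ - S| := by rw [sinQuasiEnergy, abs_mul, abs_of_pos h.pos]
    _ ≤ q * (1 + |S|) := by
      gcongr
      · exact h.pos.le
      · exact (abs_sub _ _).trans (by gcongr; exact abs_sin_le_one φ)
    _ < 1 := h.mul_one_add_abs_lt_one

lemma one_sub_sinQuasiEnergy_sq_pos (φ : ℝ) : 0 < 1 - sinQuasiEnergy q S φ ^ 2 := by
  have := (sq_lt_one_iff_abs_lt_one _).2 (h.abs_sinQuasiEnergy_lt_one φ)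
  linarith

lemma cosQuasiEnergy_pos (φ : ℝ) : 0 < cosQuasiEnergy q S φ :=
  sqrt_pos.2 (h.one_sub_sinQuasiEnergy_sq_pos φ)

lemma cosQuasiEnergy_sq (φ : ℝ) : cosQuasiEnergy q S φ ^ 2 = 1 - sinQuasiEnergy q S φ ^ 2 :=
  sq_sqrt (h.one_sub_sinQuasiEnergy_sq_pos φ).le

lemma groupVelocity_mul_cosQuasiEnergy (φ : ℝ) :
    groupVelocity q S φ * cosQuasiEnergy q S φ = q * cos φ :=
  div_mul_cancel₀ _ (h.cosQuasiEnergy_pos φ).ne'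

lemma sin_quasiEnergy (φ : ℝ) : sin (quasiEnergy q S φ) = sinQuasiEnergy q S φ :=
  have hs := abs_lt.1 (h.abs_sinQuasiEnergy_lt_one φ)
  sin_arcsin hs.1.le hs.2.le

lemma hasDerivAt_quasiEnergy (φ : ℝ) :
    HasDerivAt (quasiEnergy q S) (groupVelocity q S φ) φ := by
  obtain ⟨hlo, hhi⟩ := abs_lt.1 (h.abs_sinQuasiEnergy_lt_one φ)
  refine ((hasDerivAt_arcsin hlo.ne' hhi.ne).comp φ
    (hasDerivAt_sinQuasiEnergy q S φ)).congr_deriv ?_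
  rw [groupVelocity, cosQuasiEnergy, one_div_mul_eq_div]

lemma hasDerivAt_cosQuasiEnergy (φ : ℝ) :
    HasDerivAt (cosQuasiEnergy q S) (-(sinQuasiEnergy q S φ * groupVelocity q S φ)) φ := by
  refine ((((hasDerivAt_sinQuasiEnergy q S φ).pow 2).const_sub 1).sqrt
    (h.one_sub_sinQuasiEnergy_sq_pos φ).ne').congr_deriv ?_
  change _ / (2 * cosQuasiEnergy q S φ) = _
  rw [groupVelocity]
  have := (h.cosQuasiEnergy_pos φ).ne'
  field_simp
  ring

lemma hasDerivAt_groupVelocity (φ : ℝ) :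
    HasDerivAt (groupVelocity q S)
      (-(q * velocitySlope q S φ) / cosQuasiEnergy q S φ) φ := by
  have hc := (h.cosQuasiEnergy_pos φ).ne'
  refine (((hasDerivAt_cos φ).const_mul q).div (h.hasDerivAt_cosQuasiEnergy φ) hc).congr_deriv ?_
  rw [← h.groupVelocity_mul_cosQuasiEnergy, velocitySlope, sinQuasiEnergy]
  field_simp
  ring

lemma continuous_cosQuasiEnergy : Continuous (cosQuasiEnergy q S) :=
  continuous_iff_continuousAt.2 fun φ ↦ (h.hasDerivAt_cosQuasiEnergy φ).continuousAt

lemma continuous_groupVelocity : Continuous (groupVelocity q S) :=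
  continuous_iff_continuousAt.2 fun φ ↦ (h.hasDerivAt_groupVelocity φ).continuousAt

lemma velocityQuartic_groupVelocity (φ : ℝ) :
    velocityQuartic q S (groupVelocity q S φ) = (q * velocitySlope q S φ) ^ 2 := by
  have hv : q ^ 2 * (1 - sin φ ^ 2) = groupVelocity q S φ ^ 2 * (1 - (q * (sin φ - S)) ^ 2) := by
    rw [← cos_sq', ← mul_pow, ← h.groupVelocity_mul_cosQuasiEnergy φ, mul_pow,
      h.cosQuasiEnergy_sq, sinQuasiEnergy]
  have := velocityQuartic_sub_sq q S (groupVelocity q S φ) (sin φ)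
  rw [hv, sub_self, mul_zero] at this
  exact sub_eq_zero.1 this.symm

lemma discr_pos : 0 < (1 - q) ^ 2 - q ^ 2 * S ^ 2 := by
  have hfac : (1 - q) ^ 2 - q ^ 2 * S ^ 2 = (1 - q * (1 + |S|)) * (1 - q * (1 - |S|)) := by
    rw [← sq_abs S]
    ring
  have := h.mul_one_add_abs_lt_one
  rw [hfac]
  exact mul_pos (by linarith) (by nlinarith [mul_nonneg h.pos.le (abs_nonneg S)])

lemma discr_lt : (1 - q) ^ 2 - q ^ 2 * S ^ 2 < (1 + q) ^ 2 - q ^ 2 * S ^ 2 := by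
  nlinarith [h.pos]

lemma frontVelocity_pos : 0 < frontVelocity q S :=
  half_pos (sub_pos.2 (sqrt_lt_sqrt h.discr_pos.le h.discr_lt))

lemma exists_velocityQuartic_eq_mul :
    ∃ k, frontVelocity q S < k ∧ frontVelocity q S * k = q ∧
      ∀ y, velocityQuartic q S y = (frontVelocity q S ^ 2 - y ^ 2) * (k ^ 2 - y ^ 2) := by
  refine ⟨(√((1 + q) ^ 2 - q ^ 2 * S ^ 2) + √((1 - q) ^ 2 - q ^ 2 * S ^ 2)) / 2, ?_⟩
  have hsq := sq_sqrt (h.discr_pos.trans h.discr_lt).le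
  have hsq' := sq_sqrt h.discr_pos.le
  have hpos := sqrt_pos.2 h.discr_pos
  rw [frontVelocity]
  generalize √((1 + q) ^ 2 - q ^ 2 * S ^ 2) = a at *
  generalize √((1 - q) ^ 2 - q ^ 2 * S ^ 2) = b at *
  have hprod : (a - b) / 2 * ((a + b) / 2) = q := by linear_combination (hsq - hsq') / 4
  have hsum : ((a - b) / 2) ^ 2 + ((a + b) / 2) ^ 2 = 1 + q ^ 2 * (1 - S ^ 2) := by
    linear_combination (hsq + hsq') / 2
  refine ⟨by linarith, hprod, fun y ↦ ?_⟩
  rw [velocityQuartic, ← hsum, ← hprod]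
  ring

lemma frontVelocity_sq_mul_lt_one : frontVelocity q S ^ 2 * (1 + |S|) < 1 := by
  obtain ⟨k, hk, hmul, -⟩ := h.exists_velocityQuartic_eq_mul
  have hle : frontVelocity q S ^ 2 ≤ q := by nlinarith [h.frontVelocity_pos]
  exact (mul_le_mul_of_nonneg_right hle (by positivity)).trans_lt h.mul_one_add_abs_lt_one

lemma frontVelocity_sq_lt_one : frontVelocity q S ^ 2 < 1 := by
  nlinarith [h.frontVelocity_sq_mul_lt_one, abs_nonneg S, sq_nonneg (frontVelocity q S)]

lemma one_sub_sq_pos {y : ℝ} (hy : y ∈ Set.Ioo (-frontVelocity q S) (frontVelocity q S)) :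
    0 < 1 - y ^ 2 := by
  linarith [sq_lt_sq' hy.1 hy.2, h.frontVelocity_sq_lt_one]

lemma velocityQuartic_pos {y : ℝ} (hy : y ∈ Set.Ioo (-frontVelocity q S) (frontVelocity q S)) :
    0 < velocityQuartic q S y := by
  obtain ⟨k, hk, -, hfac⟩ := h.exists_velocityQuartic_eq_mul
  have hy' := sq_lt_sq' hy.1 hy.2
  have hk' := pow_lt_pow_left₀ hk h.frontVelocity_pos.le two_ne_zero
  rw [hfac]
  exact mul_pos (by linarith) (by linarith)

lemma velocityQuartic_frontVelocity : velocityQuartic q S (frontVelocity q S) = 0 := by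
  obtain ⟨k, -, -, hfac⟩ := h.exists_velocityQuartic_eq_mul
  rw [hfac, sub_self, zero_mul]

lemma sin_frontMomentum_mem_Ioo :
    -(S * frontVelocity q S ^ 2 / (1 - frontVelocity q S ^ 2)) ∈ Set.Ioo (-1) 1 := by
  have hpos : 0 < 1 - frontVelocity q S ^ 2 := by linarith [h.frontVelocity_sq_lt_one]
  rw [Set.mem_Ioo, ← abs_lt, abs_neg, abs_div, abs_of_pos hpos, div_lt_one hpos, abs_mul,
    abs_of_nonneg (sq_nonneg (frontVelocity q S))]
  linarith [h.frontVelocity_sq_mul_lt_one]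

lemma sin_frontMomentum :
    sin (frontMomentum q S) = -(S * frontVelocity q S ^ 2 / (1 - frontVelocity q S ^ 2)) :=
  sin_arcsin h.sin_frontMomentum_mem_Ioo.1.le h.sin_frontMomentum_mem_Ioo.2.le

lemma frontMomentum_lt_pi_div_two : frontMomentum q S < π / 2 :=
  arcsin_lt_pi_div_two.2 h.sin_frontMomentum_mem_Ioo.2

lemma neg_pi_div_two_lt_frontMomentum : -(π / 2) < frontMomentum q S :=
  neg_pi_div_two_lt_arcsin.2 h.sin_frontMomentum_mem_Ioo.1

lemma one_sub_sq_mul_sin_frontMomentum :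
    (1 - frontVelocity q S ^ 2) * sin (frontMomentum q S) + S * frontVelocity q S ^ 2 = 0 := by
  have : 1 - frontVelocity q S ^ 2 ≠ 0 := by linarith [h.frontVelocity_sq_lt_one]
  rw [h.sin_frontMomentum]
  field_simp
  ring

lemma groupVelocity_frontMomentum :
    groupVelocity q S (frontMomentum q S) = frontVelocity q S := by
  have hcos : 0 < cos (frontMomentum q S) :=
    cos_pos_of_mem_Ioo ⟨h.neg_pi_div_two_lt_frontMomentum, h.frontMomentum_lt_pi_div_two⟩
  have hc := h.cosQuasiEnergy_pos (frontMomentum q S)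
  have hzero := velocityQuartic_sub_sq q S (frontVelocity q S) (sin (frontMomentum q S))
  rw [h.one_sub_sq_mul_sin_frontMomentum, h.velocityQuartic_frontVelocity, mul_zero,
    zero_pow two_ne_zero, sub_zero, ← cos_sq', ← sinQuasiEnergy, ← h.cosQuasiEnergy_sq, mul_eq_zero,
    ← mul_pow, ← mul_pow] at hzero
  have hsq := sub_eq_zero.1 (hzero.resolve_left (by linarith [h.frontVelocity_sq_lt_one]))
  rw [groupVelocity, div_eq_iff hc.ne']
  exact (sq_eq_sq₀ (mul_pos h.pos hcos).le (mul_pos h.frontVelocity_pos hc).le).1 hsq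

lemma velocitySlope_frontMomentum : velocitySlope q S (frontMomentum q S) = 0 := by
  rw [velocitySlope, h.groupVelocity_frontMomentum, h.one_sub_sq_mul_sin_frontMomentum]

lemma velocitySlope_mul_cosQuasiEnergy_sq (φ : ℝ) :
    velocitySlope q S φ * cosQuasiEnergy q S φ ^ 2 = slopeQuadratic q S (sin φ) := by
  have hv : groupVelocity q S φ ^ 2 * cosQuasiEnergy q S φ ^ 2 = q ^ 2 * (1 - sin φ ^ 2) := by
    rw [← mul_pow, h.groupVelocity_mul_cosQuasiEnergy, mul_pow, cos_sq']
  have hc := h.cosQuasiEnergy_sq φ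
  rw [sinQuasiEnergy] at hc
  rw [velocitySlope, slopeQuadratic]
  linear_combination (S - sin φ) * hv + sin φ * hc

lemma strictMonoOn_slopeQuadratic : StrictMonoOn (slopeQuadratic q S) (Set.Icc (-1) 1) := by
  intro σ hσ τ hτ hlt
  have hsum : |σ + τ| ≤ 2 := abs_le.2 ⟨by linarith [hσ.1, hτ.1], by linarith [hσ.2, hτ.2]⟩
  have hS : -(2 * |S|) ≤ S * (σ + τ) := by
    have := neg_abs_le (S * (σ + τ))
    rw [abs_mul] at this
    nlinarith [abs_nonneg S]
  have hgap : 0 < 1 - q ^ 2 * (1 + |S|) ^ 2 := by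
    have := pow_lt_one₀ (mul_nonneg h.pos.le (by positivity)) h.mul_one_add_abs_lt_one two_ne_zero
    rw [mul_pow] at this
    linarith
  have hslope : 0 < q ^ 2 * (S * (σ + τ)) + (1 - q ^ 2 - q ^ 2 * S ^ 2) := by
    rw [← sq_abs S]
    nlinarith [mul_le_mul_of_nonneg_left hS (sq_nonneg q)]
  have := mul_pos (sub_pos.2 hlt) hslope
  simp only [slopeQuadratic]
  linarith

lemma velocitySlope_pos {φ : ℝ}
    (hφ : φ ∈ Set.Ioo (frontMomentum q S) (π - frontMomentum q S)) : 0 < velocitySlope q S φ := by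
  have hmem := h.sin_frontMomentum_mem_Ioo
  have hlt : sin (frontMomentum q S) < sin φ := by
    rw [h.sin_frontMomentum]
    exact lt_sin_of_mem_Ioo_arcsin (Set.Ioo_subset_Icc_self hmem) hφ
  have hmono := h.strictMonoOn_slopeQuadratic (sin_mem_Icc _) (sin_mem_Icc _) hlt
  rw [← h.velocitySlope_mul_cosQuasiEnergy_sq, ← h.velocitySlope_mul_cosQuasiEnergy_sq,
    h.velocitySlope_frontMomentum, zero_mul] at hmono
  exact pos_of_mul_pos_left hmono (sq_nonneg _)

lemma strictAntiOn_groupVelocity :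
    StrictAntiOn (groupVelocity q S) (Set.Icc (frontMomentum q S) (π - frontMomentum q S)) := by
  refine strictAntiOn_of_deriv_neg (convex_Icc _ _) h.continuous_groupVelocity.continuousOn
    fun φ hφ ↦ ?_
  rw [interior_Icc] at hφ
  rw [(h.hasDerivAt_groupVelocity φ).deriv]
  exact div_neg_of_neg_of_pos (neg_neg_of_pos (mul_pos h.pos (h.velocitySlope_pos hφ)))
    (h.cosQuasiEnergy_pos φ)

lemma image_groupVelocity :
    groupVelocity q S '' Set.Ioo (frontMomentum q S) (π - frontMomentum q S) =
      Set.Ioo (-frontVelocity q S) (frontVelocity q S) := by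
  rw [h.continuous_groupVelocity.continuousOn.image_Ioo_of_strictAntiOn
    (by linarith [h.frontMomentum_lt_pi_div_two]) h.strictAntiOn_groupVelocity,
    groupVelocity_pi_sub, h.groupVelocity_frontMomentum]

lemma sin_eq_branchSin {φ : ℝ}
    (hφ : φ ∈ Set.Ioo (frontMomentum q S) (π - frontMomentum q S)) :
    sin φ = branchSin q S (groupVelocity q S φ) := by
  have hmem : groupVelocity q S φ ∈ Set.Ioo (-frontVelocity q S) (frontVelocity q S) :=
    h.image_groupVelocity ▸ Set.mem_image_of_mem _ hφ
  rw [branchSin, h.velocityQuartic_groupVelocity,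
    sqrt_sq (mul_pos h.pos (h.velocitySlope_pos hφ)).le]
  have := (h.one_sub_sq_pos hmem).ne'
  have := h.pos.ne'
  rw [velocitySlope]
  field_simp
  ring

lemma cosQuasiEnergy_eq_branchCos {φ : ℝ}
    (hφ : φ ∈ Set.Ioo (frontMomentum q S) (π - frontMomentum q S)) :
    cosQuasiEnergy q S φ = branchCos q S (groupVelocity q S φ) := by
  rw [branchCos, ← h.sin_eq_branchSin hφ]
  rfl

lemma branchCos_div_sqrt_groupVelocity {φ : ℝ}
    (hφ : φ ∈ Set.Ioo (frontMomentum q S) (π - frontMomentum q S)) :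
    branchCos q S (groupVelocity q S φ) / √(velocityQuartic q S (groupVelocity q S φ)) =
      |deriv (groupVelocity q S) φ|⁻¹ := by
  rw [← h.cosQuasiEnergy_eq_branchCos hφ, (h.hasDerivAt_groupVelocity φ).deriv,
    h.velocityQuartic_groupVelocity, sqrt_sq_eq_abs, abs_div, abs_neg,
    abs_of_pos (h.cosQuasiEnergy_pos φ), inv_div]

lemma deriv_groupVelocity_ne_zero {φ : ℝ}
    (hφ : φ ∈ Set.Ioo (frontMomentum q S) (π - frontMomentum q S)) :
    deriv (groupVelocity q S) φ ≠ 0 := by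
  rw [(h.hasDerivAt_groupVelocity φ).deriv]
  exact div_ne_zero (neg_ne_zero.2 (mul_pos h.pos (h.velocitySlope_pos hφ)).ne')
    (h.cosQuasiEnergy_pos φ).ne'

variable {E : Type*} [NormedAddCommGroup E] [NormedSpace ℝ E]

lemma abs_deriv_smul_branchCos_div_sqrt_smul (F : ℝ → E) :
    Set.EqOn (fun φ ↦ |deriv (groupVelocity q S) φ| •
      (branchCos q S (groupVelocity q S φ) / √(velocityQuartic q S (groupVelocity q S φ))) •
        F (groupVelocity q S φ)) (fun φ ↦ F (groupVelocity q S φ))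
      (Set.Ioo (frontMomentum q S) (π - frontMomentum q S)) := fun φ hφ ↦ by
  simp only [h.branchCos_div_sqrt_groupVelocity hφ, smul_smul,
    mul_inv_cancel₀ (abs_ne_zero.2 (h.deriv_groupVelocity_ne_zero hφ)), one_smul]

lemma integral_branch_smul (F : ℝ → E) :
    ∫ y in Set.Ioo (-frontVelocity q S) (frontVelocity q S),
        (branchCos q S y / √(velocityQuartic q S y)) • F y =
      ∫ φ in Set.Ioo (frontMomentum q S) (π - frontMomentum q S), F (groupVelocity q S φ) := by
  rw [← h.image_groupVelocity, integral_image_eq_integral_abs_deriv_smul measurableSet_Ioo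
    (fun φ _ ↦ (h.hasDerivAt_groupVelocity φ).differentiableAt.hasDerivAt.hasDerivWithinAt)
    (h.strictAntiOn_groupVelocity.injOn.mono Set.Ioo_subset_Icc_self)]
  exact setIntegral_congr_fun measurableSet_Ioo (h.abs_deriv_smul_branchCos_div_sqrt_smul F)

lemma integrableOn_branch_smul_iff (F : ℝ → E) :
    IntegrableOn (fun y ↦ (branchCos q S y / √(velocityQuartic q S y)) • F y)
        (Set.Ioo (-frontVelocity q S) (frontVelocity q S)) ↔
      IntegrableOn (fun φ ↦ F (groupVelocity q S φ))
        (Set.Ioo (frontMomentum q S) (π - frontMomentum q S)) := by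
  rw [← h.image_groupVelocity, integrableOn_image_iff_integrableOn_abs_deriv_smul measurableSet_Ioo
    (fun φ _ ↦ (h.hasDerivAt_groupVelocity φ).differentiableAt.hasDerivAt.hasDerivWithinAt)
    (h.strictAntiOn_groupVelocity.injOn.mono Set.Ioo_subset_Icc_self)]
  exact integrableOn_congr_fun (h.abs_deriv_smul_branchCos_div_sqrt_smul F) measurableSet_Ioo

lemma integrableOn_branch_smul {F : ℝ → E} (hF : Continuous F) :
    IntegrableOn (fun y ↦ (branchCos q S y / √(velocityQuartic q S y)) • F y)
      (Set.Ioo (-frontVelocity q S) (frontVelocity q S)) :=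
  (h.integrableOn_branch_smul_iff F).2 <|
    ((hF.comp h.continuous_groupVelocity).integrableOn_Icc).mono_set Set.Ioo_subset_Icc_self

lemma integrableOn_branch_neg_smul {F : ℝ → E} (hF : Continuous F) :
    IntegrableOn (fun y ↦ (branchCos q (-S) y / √(velocityQuartic q S y)) • F y)
      (Set.Ioo (-frontVelocity q S) (frontVelocity q S)) := by
  simpa only [frontVelocity_neg_right, velocityQuartic_neg_right]
    using h.neg.integrableOn_branch_smul hF

lemma integrableOn_velocityDensity_smul {F : ℝ → E} (hF : Continuous F) :
    IntegrableOn (fun y ↦ velocityDensity q S y • F y)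
      (Set.Ioo (-frontVelocity q S) (frontVelocity q S)) := by
  simpa only [velocityDensity, add_div, add_smul] using!
    (h.integrableOn_branch_smul hF).add (h.integrableOn_branch_neg_smul hF)

lemma intervalIntegral_comp_groupVelocity_decreasing (F : ℝ → E) :
    ∫ φ in (frontMomentum q S)..(π - frontMomentum q S), F (groupVelocity q S φ) =
      ∫ y in Set.Ioo (-frontVelocity q S) (frontVelocity q S),
        (branchCos q S y / √(velocityQuartic q S y)) • F y := by
  rw [h.integral_branch_smul, intervalIntegral.integral_of_le
    (by linarith [h.frontMomentum_lt_pi_div_two]), integral_Ioc_eq_integral_Ioo]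

lemma intervalIntegral_comp_groupVelocity_increasing (F : ℝ → E) :
    ∫ φ in (π - frontMomentum q S)..(frontMomentum q S + 2 * π), F (groupVelocity q S φ) =
      ∫ y in Set.Ioo (-frontVelocity q S) (frontVelocity q S),
        (branchCos q (-S) y / √(velocityQuartic q S y)) • F y := by
  have hrefl := intervalIntegral.integral_comp_sub_left (fun φ ↦ F (groupVelocity q S φ)) (2 * π)
    (a := frontMomentum q (-S)) (b := π - frontMomentum q (-S))
  simp only [groupVelocity_two_pi_sub, h.neg.intervalIntegral_comp_groupVelocity_decreasing,
    frontVelocity_neg_right, velocityQuartic_neg_right] at hrefl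
  rw [hrefl, frontMomentum_neg_right]
  congr 1 <;> ring

theorem intervalIntegral_comp_groupVelocity {F : ℝ → E} (hF : Continuous F) :
    ∫ φ in 0..2 * π, F (groupVelocity q S φ) =
      ∫ y in Set.Ioo (-frontVelocity q S) (frontVelocity q S), velocityDensity q S y • F y := by
  have hper : Function.Periodic (fun φ ↦ F (groupVelocity q S φ)) (2 * π) :=
    (groupVelocity_periodic q S).comp F
  have hint (a b : ℝ) : IntervalIntegrable (fun φ ↦ F (groupVelocity q S φ)) volume a b :=
    (hF.comp h.continuous_groupVelocity).intervalIntegrable a b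
  calc ∫ φ in 0..2 * π, F (groupVelocity q S φ)
      = ∫ φ in (frontMomentum q S)..(frontMomentum q S + 2 * π), F (groupVelocity q S φ) := by
        simpa only [zero_add] using hper.intervalIntegral_add_eq 0 (frontMomentum q S)
    _ = _ := by
        rw [← intervalIntegral.integral_add_adjacent_intervals (hint _ (π - frontMomentum q S))
            (hint _ _), h.intervalIntegral_comp_groupVelocity_decreasing,
          h.intervalIntegral_comp_groupVelocity_increasing,
          ← integral_add (h.integrableOn_branch_smul hF) (h.integrableOn_branch_neg_smul hF)]
        simp only [velocityDensity, add_div, add_smul]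

end IsGapped

end DispersionRelation

section Density

variable {ρ ν : ℝ}

lemma rz_sq (hρ : ρ ∈ Set.Ioo (0 : ℝ) 1) : rz ρ ^ 2 = 1 - ρ ^ 2 :=
  sq_sqrt (by nlinarith [hρ.1, hρ.2])

lemma rz_pos (hρ : ρ ∈ Set.Ioo (0 : ℝ) 1) : 0 < rz ρ :=
  sqrt_pos.2 (by nlinarith [hρ.1, hρ.2])

lemma eq_one_div_sqrt_two_of_eq_rz (hρ : ρ ∈ Set.Ioo (0 : ℝ) 1) (h : ρ = rz ρ) :
    ρ = 1 / √2 := by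
  have hsq := rz_sq hρ
  rw [← h] at hsq
  rw [eq_div_iff (by positivity), ← sqrt_sq hρ.1.le, ← sqrt_mul (sq_nonneg _), sqrt_eq_one]
  linarith

lemma isGapped_of_ne (hρ : ρ ∈ Set.Ioo (0 : ℝ) 1)
    (hexc : ∀ n : ℤ, ¬(ρ = 1 / √2 ∧ ν = π / 2 + n * π)) : IsGapped (ρ * rz ρ) (sin ν) := by
  have hsq := rz_sq hρ
  have hS := abs_sin_le_one ν
  have hpos : 0 < ρ * rz ρ := mul_pos hρ.1 (rz_pos hρ)
  have hle : ρ * rz ρ ≤ 1 / 2 := by nlinarith [sq_nonneg (ρ - rz ρ)]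
  refine ⟨hpos, lt_of_le_of_ne (by nlinarith) fun heq ↦ ?_⟩
  have hS' : |sin ν| = 1 := by nlinarith
  have hρ' : ρ = rz ρ := by
    rw [hS'] at heq
    exact sub_eq_zero.1 (pow_eq_zero_iff two_ne_zero |>.1 (by linarith : (ρ - rz ρ) ^ 2 = 0))
  have hcos : cos ν = 0 := by rw [← sq_eq_zero_iff, cos_sq', ← sq_abs, hS']; norm_num
  obtain ⟨n, hn⟩ := cos_eq_zero_iff.1 hcos
  exact hexc n ⟨eq_one_div_sqrt_two_of_eq_rz hρ hρ', by rw [hn]; ring⟩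

lemma hstar_eq_frontVelocity (ρ ν : ℝ) : hstar ρ ν = frontVelocity (ρ * rz ρ) (sin ν) := by
  rw [hstar, frontVelocity, mul_pow]
  ring

lemma xif_eq_velocityQuartic (hρ : ρ ∈ Set.Ioo (0 : ℝ) 1) (ν y : ℝ) :
    xif ρ ν y = velocityQuartic (ρ * rz ρ) (sin ν) y := by
  rw [xif, velocityQuartic, cos_sq']
  linear_combination (-y ^ 2) * rz_sq hρ

lemma etaM_eq_etaP_neg (ρ ν y : ℝ) : etaM ρ ν y = etaP ρ (-ν) y := by
  simp only [etaM, etaP, xif, sin_neg, cos_neg]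
  ring

lemma sqrt_etaP (hρ : ρ ∈ Set.Ioo (0 : ℝ) 1) (h : IsGapped (ρ * rz ρ) (sin ν)) {y : ℝ}
    (hy : y ∈ Set.Ioo (-hstar ρ ν) (hstar ρ ν)) :
    √(etaP ρ ν y) = branchCos (ρ * rz ρ) (sin ν) y * (1 - y ^ 2) := by
  rw [hstar_eq_frontVelocity] at hy
  have hy' := h.one_sub_sq_pos hy
  have hq := h.pos.ne'
  have hsq := sq_sqrt (h.velocityQuartic_pos hy).le
  have hη : etaP ρ ν y = 1 - (ρ * rz ρ) ^ 2 * (1 + sin ν ^ 2) -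
      (1 - (ρ * rz ρ) ^ 2 * (1 - sin ν ^ 2)) * y ^ 2 +
        2 * (ρ * rz ρ) * sin ν * √(velocityQuartic (ρ * rz ρ) (sin ν) y) := by
    rw [etaP, xif_eq_velocityQuartic hρ, cos_sq']
    ring
  rw [hη, branchCos, branchSin]
  conv_rhs => rhs; rw [← sqrt_sq hy'.le]
  rw [← sqrt_mul' _ (sq_nonneg _)]
  congr 1
  generalize √(velocityQuartic (ρ * rz ρ) (sin ν) y) = r at *
  generalize ρ * rz ρ = q at *
  rw [velocityQuartic] at hsq
  field_simp
  linear_combination hsq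

lemma sqrt_etaM (hρ : ρ ∈ Set.Ioo (0 : ℝ) 1) (h : IsGapped (ρ * rz ρ) (sin ν)) {y : ℝ}
    (hy : y ∈ Set.Ioo (-hstar ρ ν) (hstar ρ ν)) :
    √(etaM ρ ν y) = branchCos (ρ * rz ρ) (-sin ν) y * (1 - y ^ 2) := by
  have hstar_neg : hstar ρ (-ν) = hstar ρ ν := by simp [hstar]
  rw [etaM_eq_etaP_neg, ← sin_neg]
  exact sqrt_etaP hρ (by rw [sin_neg]; exact h.neg) (by rwa [hstar_neg])

variable (α β : ℂ)

lemma continuous_gam (ρ ν : ℝ) : Continuous (gam ρ ν α β) := by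
  unfold gam
  fun_prop

lemma dens_eq_indicator (hρ : ρ ∈ Set.Ioo (0 : ℝ) 1) (h : IsGapped (ρ * rz ρ) (sin ν)) :
    dens ρ ν α β =
      (Set.Ioo (-frontVelocity (ρ * rz ρ) (sin ν)) (frontVelocity (ρ * rz ρ) (sin ν))).indicator
        fun y ↦ velocityDensity (ρ * rz ρ) (sin ν) y * (gam ρ ν α β y / (2 * π)) := by
  ext y
  rw [dens, Set.indicator_apply, ← hstar_eq_frontVelocity]
  refine ite_congr rfl (fun hy ↦ ?_) fun _ ↦ rfl
  have hy' : 1 - y ^ 2 ≠ 0 := (h.one_sub_sq_pos (hstar_eq_frontVelocity ρ ν ▸ hy)).ne'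
  rw [sqrt_etaP hρ h hy, sqrt_etaM hρ h hy, xif_eq_velocityQuartic hρ, velocityDensity]
  field_simp

lemma integrable_dens (hρ : ρ ∈ Set.Ioo (0 : ℝ) 1) (h : IsGapped (ρ * rz ρ) (sin ν)) :
    Integrable (dens ρ ν α β) := by
  rw [dens_eq_indicator α β hρ h, integrable_indicator_iff measurableSet_Ioo]
  exact h.integrableOn_velocityDensity_smul ((continuous_gam α β ρ ν).div_const _)

theorem integral_dens_smul {E : Type*} [NormedAddCommGroup E] [NormedSpace ℝ E]
    (hρ : ρ ∈ Set.Ioo (0 : ℝ) 1) (h : IsGapped (ρ * rz ρ) (sin ν)) {F : ℝ → E}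
    (hF : Continuous F) :
    ∫ y, dens ρ ν α β y • F y = (2 * π)⁻¹ • ∫ φ in 0..2 * π,
      gam ρ ν α β (groupVelocity (ρ * rz ρ) (sin ν) φ) •
        F (groupVelocity (ρ * rz ρ) (sin ν) φ) := by
  rw [← intervalIntegral.integral_smul]
  simp only [smul_smul]
  rw [h.intervalIntegral_comp_groupVelocity
    (F := fun y ↦ ((2 * π)⁻¹ * gam ρ ν α β y) • F y)
    (((continuous_gam α β ρ ν).const_mul _).smul hF), ← integral_indicator measurableSet_Ioo]
  refine integral_congr_ae (ae_of_all _ fun y ↦ ?_)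
  simp only [dens_eq_indicator α β hρ h, Set.indicator_apply]
  split_ifs
  · rw [smul_smul, div_eq_inv_mul]
  · exact zero_smul _ _

end Density

section WalkFourier

open Complex (I)
open scoped InnerProductSpace

/-- The one-step evolution of the Fourier transform of the walk at momentum `φ + ν`; the shift
by `ν` makes the quasi-energies depend on `ν` through `sin ν` only. -/
def blochSymbol (ρ ν φ : ℝ) : Matrix (Fin 2) (Fin 2) ℂ :=
  Complex.exp ((φ + ν) * I) • Bm ρ ν + B0 ρ ν + Complex.exp (-((φ + ν) * I)) • Bp ρ ν

/-- The Fourier transform of the walk at time `t` and momentum `φ + ν`. -/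
def walkFourier (ρ ν : ℝ) (α β : ℂ) (t : ℕ) (φ : ℝ) : EuclideanSpace ℂ (Fin 2) :=
  WithLp.toLp 2 ((blochSymbol ρ ν φ ^ t).mulVec ![α, β])

variable (ρ ν : ℝ) (α β : ℂ)

lemma qwalk_eq_zero {t : ℕ} {x : ℤ} (hx : x ∉ Finset.Icc (-t : ℤ) t) :
    qwalk ρ ν α β t x = 0 := by
  induction t generalizing x with
  | zero =>
    have hx : x ≠ 0 := by rintro rfl; simp at hx
    simp [qwalk, hx]
  | succ t ih =>
    simp only [Finset.mem_Icc] at hx ih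
    push_cast at hx
    rw [qwalk, ih (by lia), ih (by lia), ih (by lia)]
    simp

lemma hasSum_fourier_qwalk (φ : ℝ) (t : ℕ) :
    HasSum (fun x : ℤ ↦ Complex.exp (-((φ + ν) * x * I)) • qwalk ρ ν α β t x)
      ((blochSymbol ρ ν φ ^ t).mulVec ![α, β]) := by
  induction t with
  | zero =>
    convert hasSum_ite_eq (0 : ℤ) ![α, β] using 2 with x
    · by_cases hx : x = 0 <;> simp [hx, qwalk]
    · simp
  | succ t ih =>
    have hmul (M : Matrix (Fin 2) (Fin 2) ℂ) {f : ℤ → Fin 2 → ℂ} {v : Fin 2 → ℂ}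
        (hf : HasSum f v) : HasSum (fun x ↦ M.mulVec (f x)) (M.mulVec v) :=
      hf.map M.mulVecLin (LinearMap.continuous_of_finiteDimensional _)
    convert ((hmul (Bm ρ ν) (hasSum_fourier_shift ih 1)).add (hmul (B0 ρ ν) ih)).add
      (hmul (Bp ρ ν) (hasSum_fourier_shift ih (-1))) using 1
    · ext1 x
      simp only [qwalk, smul_add, Matrix.mulVec_smul, sub_eq_add_neg]
    · have hexp : ((φ + ν) * ((-1 : ℤ) : ℂ) * I) = -((φ + ν) * I) := by push_cast; ring
      rw [pow_succ', ← Matrix.mulVec_mulVec, hexp, Int.cast_one, mul_one, blochSymbol,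
        Matrix.add_mulVec, Matrix.add_mulVec, Matrix.smul_mulVec, Matrix.smul_mulVec,
        Matrix.mulVec_smul, Matrix.mulVec_smul]

lemma walkFourier_eq_sum (t : ℕ) (φ : ℝ) :
    walkFourier ρ ν α β t φ = ∑ x ∈ Finset.Icc (-t : ℤ) t,
      Complex.exp (-((φ + ν) * x * I)) • WithLp.toLp 2 (qwalk ρ ν α β t x) := by
  rw [walkFourier, (hasSum_fourier_qwalk ρ ν α β φ t).unique
    (hasSum_sum_of_ne_finset_zero fun x hx ↦ by rw [qwalk_eq_zero ρ ν α β hx, smul_zero])]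
  simp only [WithLp.toLp_sum, WithLp.toLp_smul]

lemma norm_toLp_qwalk_sq (t : ℕ) (x : ℤ) :
    ‖WithLp.toLp 2 (qwalk ρ ν α β t x)‖ ^ 2 = qprob ρ ν α β t x := by
  rw [EuclideanSpace.norm_sq_eq, Fin.sum_univ_two, qprob]

lemma intervalIntegral_inner_walkFourier (t : ℕ) (δ : ℝ) :
    ∫ φ in (0 : ℝ)..2 * π, ⟪walkFourier ρ ν α β t φ, walkFourier ρ ν α β t (φ - δ)⟫_ℂ =
      2 * π * ∑ x ∈ Finset.Icc (-t : ℤ) t, Complex.exp (δ * x * I) * qprob ρ ν α β t x := by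
  have hleft (φ : ℝ) : walkFourier ρ ν α β t φ = ∑ x ∈ Finset.Icc (-t : ℤ) t,
      Complex.exp (-(φ * x * I)) • Complex.exp (-(ν * x * I)) •
        WithLp.toLp 2 (qwalk ρ ν α β t x) := by
    rw [walkFourier_eq_sum]
    refine Finset.sum_congr rfl fun x _ ↦ ?_
    rw [smul_smul, ← Complex.exp_add]
    ring_nf
  have hright (φ : ℝ) : walkFourier ρ ν α β t (φ - δ) = ∑ x ∈ Finset.Icc (-t : ℤ) t,
      Complex.exp (-(φ * x * I)) • Complex.exp (-((ν - δ) * x * I)) •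
        WithLp.toLp 2 (qwalk ρ ν α β t x) := by
    rw [walkFourier_eq_sum]
    refine Finset.sum_congr rfl fun x _ ↦ ?_
    rw [smul_smul, ← Complex.exp_add]
    push_cast
    ring_nf
  simp only [hright, hleft]
  rw [intervalIntegral_inner_fourier_sum]
  congr 1
  refine Finset.sum_congr rfl fun x _ ↦ ?_
  rw [inner_smul_left, inner_smul_right, ← Complex.exp_conj, ← mul_assoc, ← Complex.exp_add,
    inner_self_eq_norm_sq_to_K, ← norm_toLp_qwalk_sq]
  simp only [map_neg, map_mul, Complex.conj_ofReal, Complex.conj_I, map_intCast]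
  push_cast
  ring_nf
  rfl

end WalkFourier

section Bands

open Complex (I)
open scoped InnerProductSpace ComplexConjugate

/-- The diagonal entry of the traceless Hermitian part of the Bloch symbol. -/
def bandDiag (ρ ν φ : ℝ) : ℝ := -(ρ * rz ρ * (cos ν + cos φ))

/-- The off-diagonal entry of the traceless Hermitian part of the Bloch symbol. -/
def bandCoupling (ρ ν φ : ℝ) : ℂ := rz ρ ^ 2 * Complex.exp (-((φ + ν) * I)) - ρ ^ 2

/-- The traceless Hermitian part of the Bloch symbol. -/
def bandMatrix (ρ ν φ : ℝ) : Matrix (Fin 2) (Fin 2) ℂ :=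
  !![(bandDiag ρ ν φ : ℂ), bandCoupling ρ ν φ; conj (bandCoupling ρ ν φ), -bandDiag ρ ν φ]

/-- The component of the initial state in the band of the Bloch symbol with eigenvalue
`i * sin θ + c`, where `c = ±cos θ` and `θ` is the quasi-energy. -/
def bandAmplitude (ρ ν : ℝ) (α β : ℂ) (c φ : ℝ) : EuclideanSpace ℂ (Fin 2) :=
  spectralPart (bandMatrix ρ ν φ).toEuclideanLin c (WithLp.toLp 2 ![α, β])

variable {ρ ν : ℝ}

lemma conj_bandCoupling (ρ ν φ : ℝ) :
    conj (bandCoupling ρ ν φ) = rz ρ ^ 2 * Complex.exp ((φ + ν) * I) - ρ ^ 2 := by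
  simp [bandCoupling, ← Complex.exp_conj]

lemma isSymmetric_bandMatrix (ρ ν φ : ℝ) : (bandMatrix ρ ν φ).toEuclideanLin.IsSymmetric :=
  Matrix.isSymmetric_toEuclideanLin_iff.2 <| by
    ext i j
    fin_cases i <;> fin_cases j <;> simp [bandMatrix]

lemma az_eq (ρ ν : ℝ) : az ρ ν = ρ * (Complex.cos ν + Complex.sin ν * I) := by
  rw [az, mul_comm I, Complex.exp_mul_I]

lemma az_mul_exp (ρ ν φ : ℝ) :
    az ρ ν * Complex.exp (-((φ + ν) * I)) = ρ * (Complex.cos φ - Complex.sin φ * I) := by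
  rw [az, mul_assoc, ← Complex.exp_add, show I * ν + -((φ + ν) * I) = (-φ : ℂ) * I by ring,
    Complex.exp_mul_I, Complex.cos_neg, Complex.sin_neg, neg_mul, ← sub_eq_add_neg]

lemma conj_az_eq (ρ ν : ℝ) : conj (az ρ ν) = ρ * (Complex.cos ν - Complex.sin ν * I) := by
  rw [az_eq, map_mul, map_add, map_mul, ← Complex.cos_conj, ← Complex.sin_conj, Complex.conj_I]
  simp only [Complex.conj_ofReal]
  ring

lemma conj_az_mul_exp (ρ ν φ : ℝ) :
    conj (az ρ ν) * Complex.exp ((φ + ν) * I) = ρ * (Complex.cos φ + Complex.sin φ * I) := by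
  have h := congrArg conj (az_mul_exp ρ ν φ)
  simpa [← Complex.exp_conj, ← Complex.cos_conj, ← Complex.sin_conj] using h

lemma blochSymbol_eq (ρ ν φ : ℝ) :
    blochSymbol ρ ν φ =
      ((sinQuasiEnergy (ρ * rz ρ) (sin ν) φ : ℂ) * I) • (1 : Matrix (Fin 2) (Fin 2) ℂ) +
        bandMatrix ρ ν φ := by
  rw [blochSymbol, Bm, B0, Bp, bandMatrix, conj_bandCoupling, bandCoupling, bandDiag,
    sinQuasiEnergy, Matrix.one_fin_two]
  simp only [Matrix.smul_of, Matrix.smul_cons, Matrix.smul_empty, smul_eq_mul, Matrix.of_add_of,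
    Matrix.add_cons, Matrix.head_cons, Matrix.tail_cons, Matrix.empty_add_empty,
    EmbeddingLike.apply_eq_iff_eq, Matrix.vecCons_inj, and_true]
  push_cast
  refine ⟨⟨?_, ?_⟩, ?_, ?_⟩
  · linear_combination -(rz ρ : ℂ) * (az_eq ρ ν + az_mul_exp ρ ν φ)
  · ring
  · ring
  · linear_combination (rz ρ : ℂ) * (conj_az_eq ρ ν + conj_az_mul_exp ρ ν φ)

lemma bandDiag_sq_add_normSq_bandCoupling (hρ : ρ ∈ Set.Ioo (0 : ℝ) 1)
    (h : IsGapped (ρ * rz ρ) (sin ν)) (φ : ℝ) :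
    bandDiag ρ ν φ ^ 2 + Complex.normSq (bandCoupling ρ ν φ) =
      cosQuasiEnergy (ρ * rz ρ) (sin ν) φ ^ 2 := by
  have hnormSq : Complex.normSq (bandCoupling ρ ν φ) =
      rz ρ ^ 4 + ρ ^ 4 - 2 * ρ ^ 2 * rz ρ ^ 2 * cos (φ + ν) := by
    have hexp : Complex.exp (-((φ + ν) * I)) * Complex.exp ((φ + ν) * I) = 1 := by
      rw [← Complex.exp_add, neg_add_cancel, Complex.exp_zero]
    have hcos := Complex.two_cos (φ + ν)
    rw [neg_mul] at hcos
    apply Complex.ofReal_injective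
    rw [← Complex.mul_conj, conj_bandCoupling, bandCoupling]
    push_cast
    linear_combination (rz ρ : ℂ) ^ 4 * hexp + (rz ρ : ℂ) ^ 2 * ρ ^ 2 * hcos
  rw [hnormSq, h.cosQuasiEnergy_sq, bandDiag, sinQuasiEnergy, cos_add]
  linear_combination ρ ^ 2 * rz ρ ^ 2 * (sin_sq_add_cos_sq φ + sin_sq_add_cos_sq ν) +
    (rz ρ ^ 2 + 1 + ρ ^ 2) * rz_sq hρ

lemma bandMatrix_apply_apply (hρ : ρ ∈ Set.Ioo (0 : ℝ) 1) (h : IsGapped (ρ * rz ρ) (sin ν))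
    {c φ : ℝ} (hc2 : c ^ 2 = cosQuasiEnergy (ρ * rz ρ) (sin ν) φ ^ 2)
    (x : EuclideanSpace ℂ (Fin 2)) :
    (bandMatrix ρ ν φ).toEuclideanLin ((bandMatrix ρ ν φ).toEuclideanLin x) = (c : ℂ) ^ 2 • x := by
  have hsq : bandMatrix ρ ν φ * bandMatrix ρ ν φ =
      (c : ℂ) ^ 2 • (1 : Matrix (Fin 2) (Fin 2) ℂ) := by
    rw [← Complex.ofReal_pow, hc2, ← bandDiag_sq_add_normSq_bandCoupling hρ h]
    push_cast
    rw [← Complex.mul_conj]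
    ext i j
    fin_cases i <;> fin_cases j <;> simp [bandMatrix, Matrix.mul_apply] <;> ring
  rw [← LinearMap.comp_apply, ← Matrix.toLpLin_mul_same, hsq, map_smul, Matrix.toLpLin_one]
  rfl

lemma blochSymbol_apply_bandAmplitude (hρ : ρ ∈ Set.Ioo (0 : ℝ) 1)
    (h : IsGapped (ρ * rz ρ) (sin ν)) (α β : ℂ) {c φ : ℝ}
    (hc : c ≠ 0) (hc2 : c ^ 2 = cosQuasiEnergy (ρ * rz ρ) (sin ν) φ ^ 2) :
    (blochSymbol ρ ν φ).toEuclideanLin (bandAmplitude ρ ν α β c φ) =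
      (c + sinQuasiEnergy (ρ * rz ρ) (sin ν) φ * I : ℂ) • bandAmplitude ρ ν α β c φ := by
  rw [blochSymbol_eq, map_add, map_smul, Matrix.toLpLin_one, LinearMap.add_apply,
    bandAmplitude, map_spectralPart hc (bandMatrix_apply_apply hρ h hc2),
    LinearMap.smul_apply, LinearMap.id_apply, add_comm, ← add_smul]

lemma walkFourier_eq_sum_bandAmplitude (hρ : ρ ∈ Set.Ioo (0 : ℝ) 1)
    (h : IsGapped (ρ * rz ρ) (sin ν)) (α β : ℂ) (t : ℕ) (φ : ℝ) :
    walkFourier ρ ν α β t φ =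
      Complex.exp (t * quasiEnergy (ρ * rz ρ) (sin ν) φ * I) •
          bandAmplitude ρ ν α β (cosQuasiEnergy (ρ * rz ρ) (sin ν) φ) φ +
        Complex.exp (t * (π - quasiEnergy (ρ * rz ρ) (sin ν) φ : ℝ) * I) •
          bandAmplitude ρ ν α β (-cosQuasiEnergy (ρ * rz ρ) (sin ν) φ) φ := by
  have hc := (h.cosQuasiEnergy_pos φ).ne'
  have hpow {c θ : ℝ} (hc : c ≠ 0) (hc2 : c ^ 2 = cosQuasiEnergy (ρ * rz ρ) (sin ν) φ ^ 2)
      (hcos : cos θ = c) (hsin : sin θ = sinQuasiEnergy (ρ * rz ρ) (sin ν) φ) :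
      ((blochSymbol ρ ν φ).toEuclideanLin ^ t) (bandAmplitude ρ ν α β c φ) =
        Complex.exp (t * θ * I) • bandAmplitude ρ ν α β c φ := by
    rw [pow_apply_of_apply_eq_smul (blochSymbol_apply_bandAmplitude hρ h α β hc hc2), ← hcos,
      ← hsin, mul_assoc, Complex.exp_nat_mul, Complex.exp_mul_I, Complex.ofReal_cos,
      Complex.ofReal_sin]
  have hwalk : walkFourier ρ ν α β t φ =
      ((blochSymbol ρ ν φ).toEuclideanLin ^ t) (WithLp.toLp 2 ![α, β]) := by
    rw [← Matrix.toLpLin_pow]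
    rfl
  rw [hwalk, ← hpow hc rfl (cos_quasiEnergy _ _ _) (h.sin_quasiEnergy φ),
    ← hpow (neg_ne_zero.2 hc) (neg_sq _) (by rw [cos_pi_sub, cos_quasiEnergy])
      (by rw [sin_pi_sub, h.sin_quasiEnergy]), ← map_add]
  exact congrArg _ (spectralPart_add_spectralPart_neg _ _ _).symm

lemma re_inner_bandMatrix (ρ ν φ : ℝ) (α β : ℂ) :
    (⟪(WithLp.toLp 2 ![α, β] : EuclideanSpace ℂ (Fin 2)),
      (bandMatrix ρ ν φ).toEuclideanLin (WithLp.toLp 2 ![α, β])⟫_ℂ).re =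
      bandDiag ρ ν φ * (‖α‖ ^ 2 - ‖β‖ ^ 2) + 2 * (conj α * bandCoupling ρ ν φ * β).re := by
  simp only [Matrix.toLpLin_toLp, Matrix.toLin'_apply, bandMatrix, PiLp.inner_apply,
    Fin.sum_univ_two, Matrix.mulVec_cons, Matrix.mulVec_empty, Matrix.cons_val_zero]
  simp [Complex.sq_norm, Complex.normSq_apply]
  ring

lemma norm_bandAmplitude_sq (hρ : ρ ∈ Set.Ioo (0 : ℝ) 1) (h : IsGapped (ρ * rz ρ) (sin ν))
    (α β : ℂ) {c φ : ℝ} (hc : c ≠ 0)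
    (hc2 : c ^ 2 = cosQuasiEnergy (ρ * rz ρ) (sin ν) φ ^ 2) :
    ‖bandAmplitude ρ ν α β c φ‖ ^ 2 = (‖α‖ ^ 2 + ‖β‖ ^ 2 + c⁻¹ * (bandDiag ρ ν φ *
      (‖α‖ ^ 2 - ‖β‖ ^ 2) + 2 * (conj α * bandCoupling ρ ν φ * β).re)) / 2 := by
  rw [bandAmplitude, norm_spectralPart_sq hc (bandMatrix_apply_apply hρ h hc2)
    (isSymmetric_bandMatrix ρ ν φ), re_inner_bandMatrix, EuclideanSpace.norm_sq_eq,
    Fin.sum_univ_two]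
  rfl

lemma bandDiag_pi_sub_sub (ρ ν φ : ℝ) :
    bandDiag ρ ν (π - φ) - bandDiag ρ ν φ = 2 * (ρ * rz ρ) * cos φ := by
  rw [bandDiag, bandDiag, cos_pi_sub]
  ring

lemma bandCoupling_pi_sub_sub (ρ ν φ : ℝ) :
    bandCoupling ρ ν (π - φ) - bandCoupling ρ ν φ =
      ((-(2 * rz ρ ^ 2 * cos φ) : ℝ) : ℂ) * Complex.exp (-(ν * I)) := by
  have hexp : Complex.exp (-((π - φ + ν) * I)) =
      -(Complex.exp (φ * I) * Complex.exp (-(ν * I))) := by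
    rw [← Complex.exp_add, ← Complex.exp_sub_pi_mul_I]
    ring_nf
  have hexp' : Complex.exp (-((φ + ν) * I)) = Complex.exp (-φ * I) * Complex.exp (-(ν * I)) := by
    rw [← Complex.exp_add]
    ring_nf
  have hcos := Complex.two_cos φ
  rw [bandCoupling, bandCoupling]
  push_cast
  rw [hexp, hexp']
  linear_combination (rz ρ : ℂ) ^ 2 * Complex.exp (-(ν * I)) * hcos

-- The `-` band at `φ` and the `+` band at `π - φ` travel at the same velocity; neither squared norm
-- alone is a function of that velocity.
lemma norm_bandAmplitude_sq_add (hρ : ρ ∈ Set.Ioo (0 : ℝ) 1) (h : IsGapped (ρ * rz ρ) (sin ν))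
    {α β : ℂ} (hαβ : ‖α‖ ^ 2 + ‖β‖ ^ 2 = 1) (φ : ℝ) :
    ‖bandAmplitude ρ ν α β (-cosQuasiEnergy (ρ * rz ρ) (sin ν) φ) φ‖ ^ 2 +
        ‖bandAmplitude ρ ν α β (cosQuasiEnergy (ρ * rz ρ) (sin ν) (π - φ)) (π - φ)‖ ^ 2 =
      gam ρ ν α β (groupVelocity (ρ * rz ρ) (sin ν) φ) := by
  have hc := (h.cosQuasiEnergy_pos φ).ne'
  have hexp : Complex.exp (-(ν * I)) = ((cos ν : ℝ) : ℂ) - ((sin ν : ℝ) : ℂ) * I := by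
    rw [← neg_mul, Complex.exp_mul_I, Complex.cos_neg, Complex.sin_neg, neg_mul, ← sub_eq_add_neg,
      Complex.ofReal_cos, Complex.ofReal_sin]
  have hcoupling : (conj α * bandCoupling ρ ν (π - φ) * β).re -
      (conj α * bandCoupling ρ ν φ * β).re = -(2 * rz ρ ^ 2 * cos φ) *
        ((α * conj β).re * cos ν - (α * conj β).im * sin ν) := by
    rw [← Complex.sub_re, ← sub_mul, ← mul_sub, bandCoupling_pi_sub_sub, mul_left_comm, mul_assoc,
      Complex.re_ofReal_mul, hexp]
    simp only [Complex.mul_re, Complex.mul_im, Complex.sub_re, Complex.sub_im, Complex.conj_re,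
      Complex.conj_im, Complex.ofReal_re, Complex.ofReal_im, Complex.I_re, Complex.I_im]
    ring
  rw [norm_bandAmplitude_sq hρ h α β (neg_ne_zero.2 hc) (neg_sq _),
    norm_bandAmplitude_sq hρ h α β (h.cosQuasiEnergy_pos _).ne' rfl, cosQuasiEnergy_pi_sub, hαβ,
    gam, groupVelocity]
  have hdiag := bandDiag_pi_sub_sub ρ ν φ
  have hρ0 := hρ.1.ne'
  rw [inv_neg]
  generalize (conj α * bandCoupling ρ ν (π - φ) * β).re = couplingRe at *
  field_simp
  linear_combination 2 * hcoupling + (‖α‖ ^ 2 - ‖β‖ ^ 2) * hdiag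

end Bands

section BallisticLimit

open Complex (I)
open scoped InnerProductSpace

variable {ρ ν : ℝ} {α β : ℂ}

lemma continuous_walkFourier (ρ ν : ℝ) (α β : ℂ) (t : ℕ) : Continuous (walkFourier ρ ν α β t) := by
  simp only [funext (walkFourier_eq_sum ρ ν α β t)]
  fun_prop

lemma continuous_bandAmplitude (ρ ν : ℝ) (α β : ℂ) {c : ℝ → ℝ} (hc : Continuous c)
    (hc0 : ∀ φ, c φ ≠ 0) : Continuous fun φ ↦ bandAmplitude ρ ν α β (c φ) φ := by
  have hc0' (φ : ℝ) : (c φ : ℂ) ≠ 0 := Complex.ofReal_ne_zero.2 (hc0 φ)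
  have hdiag : Continuous fun φ ↦ (bandDiag ρ ν φ : ℂ) := by unfold bandDiag; fun_prop
  have hcoupling : Continuous (bandCoupling ρ ν) := by unfold bandCoupling; fun_prop
  have hmatrix : Continuous (bandMatrix ρ ν) :=
    continuous_matrix (Fin.forall_fin_two.2 ⟨Fin.forall_fin_two.2 ⟨hdiag, hcoupling⟩,
      Fin.forall_fin_two.2 ⟨Complex.continuous_conj.comp hcoupling, hdiag.neg⟩⟩)
  simp only [bandAmplitude, spectralPart, Matrix.toLpLin_toLp, Matrix.toLin'_apply]
  fun_prop (disch := assumption)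

lemma bandAmplitude_periodic (ρ ν : ℝ) (α β : ℂ) (c φ : ℝ) :
    bandAmplitude ρ ν α β c (φ + 2 * π) = bandAmplitude ρ ν α β c φ := by
  have hexp : Complex.exp (-((φ + 2 * π + ν) * I)) = Complex.exp (-((φ + ν) * I)) := by
    rw [← Complex.exp_periodic (-((φ + 2 * π + ν) * I))]
    ring_nf
  simp only [bandAmplitude, bandMatrix, bandDiag, bandCoupling, cos_periodic φ, Complex.ofReal_add,
    Complex.ofReal_mul, Complex.ofReal_ofNat, hexp]

lemma inner_bandAmplitude_neg (hρ : ρ ∈ Set.Ioo (0 : ℝ) 1) (h : IsGapped (ρ * rz ρ) (sin ν))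
    (α β : ℂ) (φ : ℝ) :
    ⟪bandAmplitude ρ ν α β (cosQuasiEnergy (ρ * rz ρ) (sin ν) φ) φ,
      bandAmplitude ρ ν α β (-cosQuasiEnergy (ρ * rz ρ) (sin ν) φ) φ⟫_ℂ = 0 :=
  inner_spectralPart_neg (h.cosQuasiEnergy_pos φ).ne' (bandMatrix_apply_apply hρ h rfl)
    (isSymmetric_bandMatrix ρ ν φ) _

lemma norm_walkFourier (hρ : ρ ∈ Set.Ioo (0 : ℝ) 1) (h : IsGapped (ρ * rz ρ) (sin ν))
    (hαβ : ‖α‖ ^ 2 + ‖β‖ ^ 2 = 1) (t : ℕ) (φ : ℝ) : ‖walkFourier ρ ν α β t φ‖ = 1 := by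
  have hexp (r : ℝ) : ‖Complex.exp (t * r * I)‖ = 1 := by
    rw [← Complex.ofReal_natCast, ← Complex.ofReal_mul, Complex.norm_exp_ofReal_mul_I]
  rw [walkFourier_eq_sum_bandAmplitude hρ h,
    norm_smul_add_smul_eq_norm_add (inner_bandAmplitude_neg hρ h α β φ) (hexp _) (hexp _),
    bandAmplitude, bandAmplitude, spectralPart_add_spectralPart_neg, EuclideanSpace.norm_eq,
    Fin.sum_univ_two]
  simp [hαβ]

lemma tendsto_inner_walkFourier (hρ : ρ ∈ Set.Ioo (0 : ℝ) 1) (h : IsGapped (ρ * rz ρ) (sin ν))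
    (α β : ℂ) (u φ : ℝ) :
    Tendsto (fun t : ℕ ↦ ⟪walkFourier ρ ν α β t φ, walkFourier ρ ν α β t (φ - u / t)⟫_ℂ) atTop
      (𝓝 (Complex.exp (-(u * groupVelocity (ρ * rz ρ) (sin ν) φ) * I) *
          (‖bandAmplitude ρ ν α β (cosQuasiEnergy (ρ * rz ρ) (sin ν) φ) φ‖ ^ 2 : ℝ) +
        Complex.exp (u * groupVelocity (ρ * rz ρ) (sin ν) φ * I) *
          (‖bandAmplitude ρ ν α β (-cosQuasiEnergy (ρ * rz ρ) (sin ν) φ) φ‖ ^ 2 : ℝ))) := by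
  have hc (φ : ℝ) := (h.cosQuasiEnergy_pos φ).ne'
  have horth := inner_bandAmplitude_neg hρ h α β φ
  have hlim := tendsto_inner_wavepacket (φ := φ)
    (A := ![fun φ ↦ bandAmplitude ρ ν α β (cosQuasiEnergy (ρ * rz ρ) (sin ν) φ) φ,
      fun φ ↦ bandAmplitude ρ ν α β (-cosQuasiEnergy (ρ * rz ρ) (sin ν) φ) φ])
    (θ := ![quasiEnergy (ρ * rz ρ) (sin ν), fun φ ↦ π - quasiEnergy (ρ * rz ρ) (sin ν) φ])
    (v := ![groupVelocity (ρ * rz ρ) (sin ν) φ, -groupVelocity (ρ * rz ρ) (sin ν) φ])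
    (Fin.forall_fin_two.2 ⟨h.hasDerivAt_quasiEnergy φ, (h.hasDerivAt_quasiEnergy φ).const_sub π⟩)
    (Fin.forall_fin_two.2
      ⟨(continuous_bandAmplitude ρ ν α β h.continuous_cosQuasiEnergy hc).continuousAt,
        (continuous_bandAmplitude ρ ν α β h.continuous_cosQuasiEnergy.neg
          fun φ ↦ neg_ne_zero.2 (hc φ)).continuousAt⟩)
    (fun i j hij ↦ by
      fin_cases i <;> fin_cases j
      exacts [absurd rfl hij, horth, inner_eq_zero_symm.1 horth, absurd rfl hij]) u
  simpa [Fin.sum_univ_two, walkFourier_eq_sum_bandAmplitude hρ h] using hlim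

lemma intervalIntegral_bandAmplitude (hρ : ρ ∈ Set.Ioo (0 : ℝ) 1)
    (h : IsGapped (ρ * rz ρ) (sin ν)) (hαβ : ‖α‖ ^ 2 + ‖β‖ ^ 2 = 1) (u : ℝ) :
    ∫ φ in (0 : ℝ)..2 * π, (Complex.exp (-(u * groupVelocity (ρ * rz ρ) (sin ν) φ) * I) *
          (‖bandAmplitude ρ ν α β (cosQuasiEnergy (ρ * rz ρ) (sin ν) φ) φ‖ ^ 2 : ℝ) +
        Complex.exp (u * groupVelocity (ρ * rz ρ) (sin ν) φ * I) *
          (‖bandAmplitude ρ ν α β (-cosQuasiEnergy (ρ * rz ρ) (sin ν) φ) φ‖ ^ 2 : ℝ)) =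
      ∫ φ in (0 : ℝ)..2 * π, gam ρ ν α β (groupVelocity (ρ * rz ρ) (sin ν) φ) •
        Complex.exp (u * groupVelocity (ρ * rz ρ) (sin ν) φ * I) := by
  have hc (φ : ℝ) := (h.cosQuasiEnergy_pos φ).ne'
  have hv := h.continuous_groupVelocity
  have hAp := continuous_bandAmplitude ρ ν α β h.continuous_cosQuasiEnergy hc
  have hAm := continuous_bandAmplitude ρ ν α β h.continuous_cosQuasiEnergy.neg
    fun φ ↦ neg_ne_zero.2 (hc φ)
  set f : ℝ → ℂ := fun φ ↦ Complex.exp (-(u * groupVelocity (ρ * rz ρ) (sin ν) φ) * I) *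
    (‖bandAmplitude ρ ν α β (cosQuasiEnergy (ρ * rz ρ) (sin ν) φ) φ‖ ^ 2 : ℝ) with hf
  have hfcont : Continuous f := by fun_prop
  have hper : Function.Periodic f (2 * π) := fun φ ↦ by
    simp only [hf, groupVelocity_periodic _ _ φ, cosQuasiEnergy_periodic _ _ φ,
      bandAmplitude_periodic]
  rw [intervalIntegral.integral_add (hfcont.intervalIntegrable _ _)
      ((by fun_prop : Continuous _).intervalIntegrable _ _),
    ← intervalIntegral_comp_pi_sub hper, ← intervalIntegral.integral_add
      ((by fun_prop : Continuous _).intervalIntegrable _ _)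
      ((by fun_prop : Continuous _).intervalIntegrable _ _)]
  refine intervalIntegral.integral_congr fun φ _ ↦ ?_
  simp only [hf]
  rw [← norm_bandAmplitude_sq_add hρ h hαβ, groupVelocity_pi_sub, Complex.real_smul]
  push_cast
  ring_nf

theorem tendsto_sum_exp_mul_qprob (hρ : ρ ∈ Set.Ioo (0 : ℝ) 1)
    (h : IsGapped (ρ * rz ρ) (sin ν)) (hαβ : ‖α‖ ^ 2 + ‖β‖ ^ 2 = 1) (u : ℝ) :
    Tendsto (fun t : ℕ ↦ ∑ x ∈ Finset.Icc (-t : ℤ) t,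
        Complex.exp (u / t * x * I) * qprob ρ ν α β t x) atTop
      (𝓝 (∫ y, dens ρ ν α β y • Complex.exp (u * y * I))) := by
  have hlim : Tendsto (fun t : ℕ ↦ ∫ φ in (0 : ℝ)..2 * π,
      ⟪walkFourier ρ ν α β t φ, walkFourier ρ ν α β t (φ - u / t)⟫_ℂ) atTop
      (𝓝 (∫ φ in (0 : ℝ)..2 * π, gam ρ ν α β (groupVelocity (ρ * rz ρ) (sin ν) φ) •
        Complex.exp (u * groupVelocity (ρ * rz ρ) (sin ν) φ * I))) := by
    rw [← intervalIntegral_bandAmplitude hρ h hαβ]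
    refine intervalIntegral.tendsto_integral_filter_of_dominated_convergence (fun _ ↦ 1)
      (.of_forall fun t ↦ ?_) (.of_forall fun t ↦ .of_forall fun φ _ ↦ ?_)
      intervalIntegrable_const (.of_forall fun φ _ ↦ tendsto_inner_walkFourier hρ h α β u φ)
    · have := continuous_walkFourier ρ ν α β t
      exact (by fun_prop : Continuous _).aestronglyMeasurable
    · refine (norm_inner_le_norm _ _).trans_eq ?_
      rw [norm_walkFourier hρ h hαβ, norm_walkFourier hρ h hαβ, one_mul]
  rw [integral_dens_smul α β hρ h (by fun_prop)]
  refine (hlim.const_smul (2 * π)⁻¹).congr fun t ↦ ?_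
  have hπ : (π : ℂ) ≠ 0 := Complex.ofReal_ne_zero.2 pi_ne_zero
  have hstep := intervalIntegral_inner_walkFourier ρ ν α β t (u / t)
  push_cast at hstep
  rw [hstep, Complex.real_smul]
  push_cast
  exact inv_mul_cancel_left₀ (mul_ne_zero two_ne_zero hπ) _

end BallisticLimit

section LimitLaw

/-- The law of `X_t / t`; for `t = 0` it is the Dirac mass at `0`. -/
def walkLaw (ρ ν : ℝ) (α β : ℂ) (t : ℕ) : Measure ℝ :=
  ∑ x ∈ Finset.Icc (-t : ℤ) t, ENNReal.ofReal (qprob ρ ν α β t x) • Measure.dirac (x / t : ℝ)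

variable {ρ ν : ℝ} {α β : ℂ}

lemma qprob_nonneg (ρ ν : ℝ) (α β : ℂ) (t : ℕ) (x : ℤ) : 0 ≤ qprob ρ ν α β t x :=
  norm_toLp_qwalk_sq ρ ν α β t x ▸ sq_nonneg _

lemma walkLaw_apply (ρ ν : ℝ) (α β : ℂ) (t : ℕ) {s : Set ℝ} (hs : MeasurableSet s) :
    walkLaw ρ ν α β t s = ENNReal.ofReal (∑ x ∈ Finset.Icc (-t : ℤ) t,
      s.indicator (fun _ ↦ qprob ρ ν α β t x) (x / t : ℝ)) := by
  rw [walkLaw, Measure.finsetSum_apply, ENNReal.ofReal_sum_of_nonneg fun x _ ↦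
    Set.indicator_nonneg (fun _ _ ↦ qprob_nonneg ρ ν α β t x) _]
  refine Finset.sum_congr rfl fun x _ ↦ ?_
  rw [Measure.smul_apply, Measure.dirac_apply' _ hs, smul_eq_mul]
  by_cases hx : (x / t : ℝ) ∈ s <;> simp [hx]

lemma walkLaw_real_Iic (ρ ν : ℝ) (α β : ℂ) {t : ℕ} (ht : 0 < t) (x : ℝ) :
    (walkLaw ρ ν α β t).real (Set.Iic x) =
      ∑' y : ℤ, if (y : ℝ) ≤ x * t then qprob ρ ν α β t y else 0 := by
  have hsum : ∑' y : ℤ, (if (y : ℝ) ≤ x * t then qprob ρ ν α β t y else 0) =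
      ∑ y ∈ Finset.Icc (-t : ℤ) t, if (y : ℝ) ≤ x * t then qprob ρ ν α β t y else 0 := by
    refine tsum_eq_sum fun y hy ↦ ?_
    rw [← norm_toLp_qwalk_sq, qwalk_eq_zero ρ ν α β hy]
    simp
  rw [hsum, measureReal_def, walkLaw_apply ρ ν α β t measurableSet_Iic, ENNReal.toReal_ofReal
    (Finset.sum_nonneg fun y _ ↦ Set.indicator_nonneg (fun _ _ ↦ qprob_nonneg ρ ν α β t y) _)]
  simp only [Set.indicator_apply, Set.mem_Iic, div_le_iff₀ (Nat.cast_pos.2 ht : (0 : ℝ) < t)]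

lemma charFun_walkLaw (ρ ν : ℝ) (α β : ℂ) (t : ℕ) (u : ℝ) :
    charFun (walkLaw ρ ν α β t) u = ∑ x ∈ Finset.Icc (-t : ℤ) t,
      Complex.exp (u / t * x * Complex.I) * qprob ρ ν α β t x := by
  rw [charFun_apply_real, walkLaw, integral_finsetSum_measure fun x _ ↦
    (integrable_dirac (by simp)).smul_measure ENNReal.ofReal_ne_top]
  refine Finset.sum_congr rfl fun x _ ↦ ?_
  rw [integral_smul_measure, integral_dirac, ENNReal.toReal_ofReal (qprob_nonneg _ _ _ _ _ _),
    Complex.real_smul, mul_comm]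
  push_cast
  ring_nf

lemma sum_qprob (hρ : ρ ∈ Set.Ioo (0 : ℝ) 1) (h : IsGapped (ρ * rz ρ) (sin ν))
    (hαβ : ‖α‖ ^ 2 + ‖β‖ ^ 2 = 1) (t : ℕ) :
    ∑ x ∈ Finset.Icc (-t : ℤ) t, qprob ρ ν α β t x = 1 := by
  have hparseval := intervalIntegral_inner_walkFourier ρ ν α β t 0
  simp only [sub_zero, inner_self_eq_norm_sq_to_K, norm_walkFourier hρ h hαβ,
    intervalIntegral.integral_const, Complex.ofReal_zero, zero_mul, Complex.exp_zero, one_mul,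
    Complex.real_smul] at hparseval
  have hπ : (2 * π : ℂ) ≠ 0 := mul_ne_zero two_ne_zero (Complex.ofReal_ne_zero.2 pi_ne_zero)
  apply Complex.ofReal_injective
  apply mul_left_cancel₀ hπ
  push_cast
  rw [← hparseval]
  simp

lemma isProbabilityMeasure_walkLaw (hρ : ρ ∈ Set.Ioo (0 : ℝ) 1)
    (h : IsGapped (ρ * rz ρ) (sin ν)) (hαβ : ‖α‖ ^ 2 + ‖β‖ ^ 2 = 1) (t : ℕ) :
    IsProbabilityMeasure (walkLaw ρ ν α β t) := by
  constructor
  simp only [walkLaw_apply ρ ν α β t .univ, Set.indicator_univ, sum_qprob hρ h hαβ,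
    ENNReal.ofReal_one]

lemma gam_nonneg (hρ : ρ ∈ Set.Ioo (0 : ℝ) 1) (h : IsGapped (ρ * rz ρ) (sin ν))
    (hαβ : ‖α‖ ^ 2 + ‖β‖ ^ 2 = 1) {y : ℝ} (hy : y ∈ Set.Ioo (-hstar ρ ν) (hstar ρ ν)) :
    0 ≤ gam ρ ν α β y := by
  rw [hstar_eq_frontVelocity, ← h.image_groupVelocity] at hy
  obtain ⟨φ, -, rfl⟩ := hy
  rw [← norm_bandAmplitude_sq_add hρ h hαβ]
  positivity

lemma dens_nonneg (hρ : ρ ∈ Set.Ioo (0 : ℝ) 1) (h : IsGapped (ρ * rz ρ) (sin ν))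
    (hαβ : ‖α‖ ^ 2 + ‖β‖ ^ 2 = 1) : 0 ≤ dens ρ ν α β := by
  intro y
  rw [Pi.zero_apply, dens]
  split_ifs with hy
  · have := (h.one_sub_sq_pos (hstar_eq_frontVelocity ρ ν ▸ hy)).le
    have := gam_nonneg hρ h hαβ hy
    positivity
  · exact le_rfl

lemma integral_dens (hρ : ρ ∈ Set.Ioo (0 : ℝ) 1) (h : IsGapped (ρ * rz ρ) (sin ν))
    (hαβ : ‖α‖ ^ 2 + ‖β‖ ^ 2 = 1) : ∫ y, dens ρ ν α β y = 1 := by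
  have hlim := tendsto_sum_exp_mul_qprob hρ h hαβ 0
  simp only [Complex.ofReal_zero, zero_div, zero_mul, Complex.exp_zero, one_mul,
    ← Complex.ofReal_sum, sum_qprob hρ h hαβ, Complex.real_smul, mul_one] at hlim
  rw [integral_complex_ofReal] at hlim
  exact_mod_cast tendsto_nhds_unique hlim tendsto_const_nhds

end LimitLaw

/-- convergence in distribution of `X_t / t` to the density `f`. -/
theorem stmt0 (ρ ν : ℝ) (hρ : ρ ∈ Set.Ioo (0 : ℝ) 1)
    (hexc : ∀ n : ℤ, ¬(ρ = 1 / Real.sqrt 2 ∧ ν = π / 2 + n * π))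
    (α β : ℂ) (hαβ : ‖α‖ ^ 2 + ‖β‖ ^ 2 = 1) (x : ℝ) :
    Tendsto (fun t : ℕ => ∑' y : ℤ, if (y : ℝ) ≤ x * t then qprob ρ ν α β t y else 0)
      atTop (𝓝 (∫ y in Set.Iic x, dens ρ ν α β y)) := by
  have h : IsGapped (ρ * rz ρ) (sin ν) := isGapped_of_ne hρ hexc
  have hint := integrable_dens α β hρ h
  have hnonneg := dens_nonneg hρ h hαβ
  have := isProbabilityMeasure_walkLaw hρ h hαβ
  have := isProbabilityMeasure_withDensity_ofReal hint hnonneg (integral_dens hρ h hαβ)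
  have hchar (u : ℝ) : Tendsto (fun t ↦ charFun (walkLaw ρ ν α β t) u) atTop
      (𝓝 (charFun (volume.withDensity fun y ↦ ENNReal.ofReal (dens ρ ν α β y)) u)) := by
    simpa only [charFun_walkLaw, charFun_withDensity_ofReal hint.aemeasurable hnonneg]
      using tendsto_sum_exp_mul_qprob hρ h hαβ u
  have hcdf := tendsto_measureReal_Iic_of_tendsto_charFun hchar x
  rw [measureReal_withDensity_ofReal hint hnonneg measurableSet_Iic] at hcdf
  refine hcdf.congr' ?_
  filter_upwards [eventually_gt_atTop 0] with t ht using walkLaw_real_Iic ρ ν α β ht x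

end
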